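/- Let w:ℝ→ℝ be continuously differentiable and let φ:ℝ^{1+3}→ℂ be a smooth solution of □φ=F such that lim_{|x|→∞}|x|^{3/2}φ(t,x)w(r−t)^{1/2}=0 for each t, and assume all integrals below converge absolutely. Then for all t₁≤t₂: E^w[φ](t₁) = E^w[φ](t₂) + ∫_{t₁}^{t₂}∫_{ℝ³} Re( (2/r)·(K̄₀(rφ))·conj(F) ) w(q) dx dt + ∫_{t₁}^{t₂}∫_{ℝ³} ( ⟨t+r⟩²|L(rφ)/r|² + ⟨t−r⟩²|∂̸φ|² ) w′(q) dx dt, where K̄₀ = (⟨t+r⟩² L + ⟨t−r⟩² L̲)/2 acts as a vector field on the function rφ. -/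

import Mathlib

noncomputable section

open Real MeasureTheory Filter
open scoped RealInnerProductSpace Topology

/-- Spatial points: `ℝ³` with the Euclidean norm. -/
abbrev Pt : Type := EuclideanSpace ℝ (Fin 3)

/-- `r = |x|`. -/
def rad (x : Pt) : ℝ := ‖x‖

/-- Japanese bracket `⟨a⟩ = (1+a²)^{1/2}`. -/
def jb (a : ℝ) : ℝ := Real.sqrt (1 + a ^ 2)

/-- `∂_t`. -/
def dT (f : ℝ → Pt → ℂ) : ℝ → Pt → ℂ := fun t x => deriv (fun s => f s x) t

/-- `∂_i`. -/
def dX (i : Fin 3) (f : ℝ → Pt → ℂ) : ℝ → Pt → ℂ :=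
  fun t x => fderiv ℝ (fun y => f t y) x (EuclideanSpace.single i 1)

/-- `∂_r = Σ (x_i/r) ∂_i`. -/
def dR (f : ℝ → Pt → ℂ) : ℝ → Pt → ℂ :=
  fun t x => ((rad x : ℝ) : ℂ)⁻¹ * ∑ i, ((x i : ℝ) : ℂ) * dX i f t x

/-- `L = ∂_t + ∂_r`. -/
def dL (f : ℝ → Pt → ℂ) : ℝ → Pt → ℂ := fun t x => dT f t x + dR f t x

/-- `L̲ = ∂_t − ∂_r`. -/
def dLbar (f : ℝ → Pt → ℂ) : ℝ → Pt → ℂ := fun t x => dT f t x - dR f t x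

/-- angular derivative `∂̸_i = ∂_i − ω_i ∂_r`. -/
def dAng (i : Fin 3) (f : ℝ → Pt → ℂ) : ℝ → Pt → ℂ :=
  fun t x => dX i f t x - ((x i / rad x : ℝ) : ℂ) * dR f t x

/-- `|∂̸ f|²`. -/
def angSq (f : ℝ → Pt → ℂ) (t : ℝ) (x : Pt) : ℝ := ∑ i, ‖dAng i f t x‖ ^ 2

/-- multiplication by `r`. -/
def rmul (f : ℝ → Pt → ℂ) : ℝ → Pt → ℂ := fun t x => ((rad x : ℝ) : ℂ) * f t x

/-- `□ = −∂_t² + Δ`. -/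
def box (f : ℝ → Pt → ℂ) : ℝ → Pt → ℂ :=
  fun t x => - dT (dT f) t x + ∑ i, dX i (dX i f) t x

/-- rotation `Ω_{ij} = x_i ∂_j − x_j ∂_i`. -/
def vrot (i j : Fin 3) (f : ℝ → Pt → ℂ) : ℝ → Pt → ℂ :=
  fun t x => ((x i : ℝ) : ℂ) * dX j f t x - ((x j : ℝ) : ℂ) * dX i f t x

/-- boost `Ω_{0i} = t ∂_i + x_i ∂_t`. -/
def vboost (i : Fin 3) (f : ℝ → Pt → ℂ) : ℝ → Pt → ℂ :=
  fun t x => (t : ℂ) * dX i f t x + ((x i : ℝ) : ℂ) * dT f t x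

/-- scaling `S = t ∂_t + r ∂_r`. -/
def vscal (f : ℝ → Pt → ℂ) : ℝ → Pt → ℂ :=
  fun t x => (t : ℂ) * dT f t x + ((rad x : ℝ) : ℂ) * dR f t x

/-- The commutator vector fields `Z`. -/
inductive VF : Type
  | time : VF
  | space : Fin 3 → VF
  | rot : Fin 3 → Fin 3 → VF
  | boost : Fin 3 → VF
  | scal : VF
  deriving DecidableEq, Fintype

/-- Action of a commutator vector field on a function. -/
def VF.app : VF → (ℝ → Pt → ℂ) → (ℝ → Pt → ℂ)
  | time => dT
  | space i => dX i
  | rot i j => vrot i j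
  | boost i => vboost i
  | scal => vscal

/-- `Z^I` for a multiindex `I` (a list of vector fields). -/
def Ziter : List VF → (ℝ → Pt → ℂ) → ℝ → Pt → ℂ
  | [], f => f
  | z :: l, f => z.app (Ziter l f)

/-- `C^∞` smoothness for a function of `(t,x)`. -/
def Smooth2 (f : ℝ → Pt → ℂ) : Prop := ContDiff ℝ (⊤ : ℕ∞) (Function.uncurry f)

/-- real-valued versions of the derivative operators -/
def dTR (f : ℝ → Pt → ℝ) : ℝ → Pt → ℝ := fun t x => deriv (fun s => f s x) t

def dXR (i : Fin 3) (f : ℝ → Pt → ℝ) : ℝ → Pt → ℝ :=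
  fun t x => fderiv ℝ (fun y => f t y) x (EuclideanSpace.single i 1)

def boxR (f : ℝ → Pt → ℝ) : ℝ → Pt → ℝ :=
  fun t x => - dTR (dTR f) t x + ∑ i, dXR i (dXR i f) t x

/-- `∂_q` acting on radiation fields `F(q,ω)`. -/
def dq (F : ℝ → Pt → ℂ) : ℝ → Pt → ℂ := fun q ω => deriv (fun s => F s ω) q

/-- `∂_{ω_i}` acting on radiation fields. -/
def dOm (i : Fin 3) (F : ℝ → Pt → ℂ) : ℝ → Pt → ℂ :=
  fun q ω => fderiv ℝ (fun y => F q y) ω (EuclideanSpace.single i 1)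

/-- angular rotation `ω_i ∂_{ω_j} − ω_j ∂_{ω_i}` on radiation fields. -/
def aRot (i j : Fin 3) (F : ℝ → Pt → ℂ) : ℝ → Pt → ℂ :=
  fun q ω => ((ω i : ℝ) : ℂ) * dOm j F q ω - ((ω j : ℝ) : ℂ) * dOm i F q ω

/-- `⟨q⟩∂_q` on radiation fields. -/
def qdq (F : ℝ → Pt → ℂ) : ℝ → Pt → ℂ := fun q ω => ((jb q : ℝ) : ℂ) * dq F q ω

/-- `q∂_q` on radiation fields. -/
def qmdq (F : ℝ → Pt → ℂ) : ℝ → Pt → ℂ := fun q ω => (q : ℂ) * dq F q ω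

/-- iterated angular derivatives `∂_ω^α` (as iterated rotations). -/
def aIter : List (Fin 3 × Fin 3) → (ℝ → Pt → ℂ) → ℝ → Pt → ℂ
  | [], F => F
  | p :: l, F => aRot p.1 p.2 (aIter l F)

/-- `‖F‖_{N,∞,γ} ≤ ε`, stated term by term: every seminorm
`sup |(⟨q⟩∂_q)^k ∂_ω^α F| ⟨q⟩^γ` with `k+|α| ≤ N` is at most `ε`. -/
def RadBound (N : ℕ) (γ ε : ℝ) (F : ℝ → Pt → ℂ) : Prop :=
  ∀ (k : ℕ) (l : List (Fin 3 × Fin 3)), k + l.length ≤ N →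
    ∀ (q : ℝ) (ω : Pt), rad ω = 1 →
      ‖(qdq^[k]) (aIter l F) q ω‖ * jb q ^ γ ≤ ε

/-- spacetime indices `α ∈ {0,1,2,3}`: `none` is the time index. -/
abbrev Ix : Type := Option (Fin 3)

/-- `L^α(ω) = (1, ω)`. -/
def Lup : Ix → Pt → ℝ
  | none => fun _ => 1
  | some i => fun ω => ω i

/-- `L_α(ω) = (−1, ω)`. -/
def Llow : Ix → Pt → ℝ
  | none => fun _ => -1
  | some i => fun ω => ω i

/-- `∂_α`. -/
def pd : Ix → (ℝ → Pt → ℂ) → ℝ → Pt → ℂ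
  | none => dT
  | some i => dX i

/-- `∂_α` (real valued). -/
def pdR : Ix → (ℝ → Pt → ℝ) → ℝ → Pt → ℝ
  | none => dTR
  | some i => dXR i

/-- the surface measure on the unit sphere `S² ⊆ ℝ³`. -/
def sphM : Measure (Metric.sphere (0 : Pt) 1) := (volume : Measure Pt).toSphere

/-- weighted `L²` norm `(∫ |g(t,x)|² w(r−t) dx)^{1/2}`. -/
def sqL2 (w : ℝ → ℝ) (g : ℝ → Pt → ℂ) (t : ℝ) : ℝ :=
  Real.sqrt (∫ x : Pt, ‖g t x‖ ^ 2 * w (rad x - t))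


/-- energy density of the weighted conformal energy `E^w[φ](t)` -/
def eDens (w : ℝ → ℝ) (f : ℝ → Pt → ℂ) (t : ℝ) (x : Pt) : ℝ :=
  (jb (t + rad x) ^ 2 * ‖dL (rmul f) t x / ((rad x : ℝ) : ℂ)‖ ^ 2
    + (jb (t + rad x) ^ 2 + jb (t - rad x) ^ 2) * angSq f t x
    + jb (t - rad x) ^ 2 * ‖dLbar (rmul f) t x / ((rad x : ℝ) : ℂ)‖ ^ 2) * w (rad x - t)

/-- the weighted conformal energy `E^w[φ](t)` -/
def Ew (w : ℝ → ℝ) (f : ℝ → Pt → ℂ) (t : ℝ) : ℝ := (1 / 2) * ∫ x : Pt, eDens w f t x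

/-- `K̄₀(rφ) = (⟨t+r⟩² L(rφ) + ⟨t−r⟩² L̲(rφ))/2` -/
def K0r (f : ℝ → Pt → ℂ) : ℝ → Pt → ℂ := fun t x =>
  (((jb (t + rad x) ^ 2 : ℝ) : ℂ) * dL (rmul f) t x
    + ((jb (t - rad x) ^ 2 : ℝ) : ℂ) * dLbar (rmul f) t x) / 2

/-- the integrand `Re((2/r)·K̄₀(rφ)·conj F)·w(q)` -/
def bulk1 (w : ℝ → ℝ) (φ F : ℝ → Pt → ℂ) (t : ℝ) (x : Pt) : ℝ :=
  ((2 / ((rad x : ℝ) : ℂ)) * K0r φ t x * (starRingEnd ℂ) (F t x)).re * w (rad x - t)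

/-- the integrand `(⟨t+r⟩²|L(rφ)/r|² + ⟨t−r⟩²|∂̸φ|²)·w′(q)` -/
def bulk2 (w : ℝ → ℝ) (φ : ℝ → Pt → ℂ) (t : ℝ) (x : Pt) : ℝ :=
  (jb (t + rad x) ^ 2 * ‖dL (rmul φ) t x / ((rad x : ℝ) : ℂ)‖ ^ 2
    + jb (t - rad x) ^ 2 * angSq φ t x) * deriv w (rad x - t)

/-!
Let `K = (1 + t² + r²) ∂_t + 2 t r ∂_r`. Away from the axis `r = 0`, the pairing of the multiplier
`2 (K φ + 2 t φ)` with `-□φ` is the spacetime divergence of a current whose zeroth-order terms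
are arranged to produce `L(rφ)/r` and `L̲(rφ)/r`: its time component is `(out + inc) / 2` and its
radial component `(inc - out) / 2`, where `out` and `inc` are the nonnegative energy flux
densities through outgoing and incoming null cones. A weight `g(t, r)` therefore costs only its
derivatives along `∂_t ∓ ∂_r` times `out` and `inc`. Near the axis the time component is `O(r⁻²)`
and the radial component is `O(r⁻¹)`, so excising a shrinking neighbourhood of the axis leaves
no contribution in the limit.

At spatial infinity, decay of `φ` is replaced by a sign: multiply `w(r - t)` by a decreasing cutoff,
in `r - t` over an interval where `w ≥ 0`, or in `r + t` if `w ≤ 0` near `+∞`. The error term then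
has a sign, and dropping it before removing the cutoff gives one inequality between the two sides;
the same argument for `-w` gives the other.
-/

section PartialDerivatives

variable {E G : Type*} [NormedAddCommGroup E] [NormedSpace ℝ E]
  [NormedAddCommGroup G] [NormedSpace ℝ G]

/-- The coordinate vector `∂_α` of `ℝ × Pt`. -/
def coordDir : Ix → ℝ × Pt
  | none => (1, 0)
  | some i => (0, EuclideanSpace.single i 1)

/-- The partial derivative `∂_α f`, for a function `f` of the point `(t, x)`; it uncurries `dT` and
`dX`. -/
def partialD (α : Ix) (f : ℝ × Pt → E) : ℝ × Pt → E := fun p => fderiv ℝ f p (coordDir α)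

theorem contDiff_partialD {f : ℝ × Pt → E} {m n : WithTop ℕ∞} (hf : ContDiff ℝ n f)
    (hmn : m + 1 ≤ n) (α : Ix) : ContDiff ℝ m (partialD α f) :=
  (hf.fderiv_right hmn).clm_apply contDiff_const

theorem partialD_comm {f : ℝ × Pt → E} (hf : ContDiff ℝ 2 f) (α β : Ix) (p : ℝ × Pt) :
    partialD α (partialD β f) p = partialD β (partialD α f) p := by
  have second_fderiv (α β : Ix) : partialD α (partialD β f) p =
      fderiv ℝ (fderiv ℝ f) p (coordDir α) (coordDir β) := by
    have hd : DifferentiableAt ℝ (fderiv ℝ f) p :=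
      (hf.fderiv_right (m := 1) le_rfl).differentiable one_ne_zero p
    unfold partialD
    rw [fderiv_clm_apply hd (differentiableAt_const _)]
    simp
  rw [second_fderiv, second_fderiv]
  exact hf.contDiffAt.isSymmSndFDerivAt (by simp) _ _

theorem partialD_clm_comp {f : ℝ × Pt → E} {p : ℝ × Pt} (l : E →L[ℝ] G)
    (hf : DifferentiableAt ℝ f p) (α : Ix) :
    partialD α (fun q => l (f q)) p = l (partialD α f p) := by
  have := (l.hasFDerivAt.comp p hf.hasFDerivAt).fderiv
  rw [partialD, show (fun q => l (f q)) = l ∘ f from rfl, this]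
  rfl

end PartialDerivatives

section LeibnizRules

variable {f g : ℝ × Pt → ℝ} {p : ℝ × Pt} {α : Ix}

theorem partialD_add (hf : DifferentiableAt ℝ f p) (hg : DifferentiableAt ℝ g p) :
    partialD α (fun q => f q + g q) p = partialD α f p + partialD α g p := by
  simp [partialD, fderiv_fun_add hf hg]

theorem partialD_neg : partialD α (fun q => -f q) p = -partialD α f p := by
  simp [partialD, fderiv_fun_neg]

theorem partialD_sub (hf : DifferentiableAt ℝ f p) (hg : DifferentiableAt ℝ g p) :
    partialD α (fun q => f q - g q) p = partialD α f p - partialD α g p := by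
  simp [partialD, fderiv_fun_sub hf hg]

theorem partialD_mul (hf : DifferentiableAt ℝ f p) (hg : DifferentiableAt ℝ g p) :
    partialD α (fun q => f q * g q) p = f p * partialD α g p + g p * partialD α f p := by
  simp [partialD, fderiv_fun_mul hf hg]

theorem partialD_pow (hf : DifferentiableAt ℝ f p) (n : ℕ) :
    partialD α (fun q => f q ^ n) p = n * f p ^ (n - 1) * partialD α f p := by
  simp [partialD, fderiv_fun_pow n hf]

theorem partialD_inv (hf : DifferentiableAt ℝ f p) (h : f p ≠ 0) :
    partialD α (fun q => (f q)⁻¹) p = -partialD α f p / f p ^ 2 := by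
  have := (hasDerivAt_inv h).comp_hasFDerivAt p hf.hasFDerivAt
  simp [partialD, show (fun q => (f q)⁻¹) = Inv.inv ∘ f from rfl, this.fderiv]
  ring

theorem partialD_sum {ι : Type*} {s : Finset ι} {f : ι → ℝ × Pt → ℝ}
    (hf : ∀ i ∈ s, DifferentiableAt ℝ (f i) p) :
    partialD α (fun q => ∑ i ∈ s, f i q) p = ∑ i ∈ s, partialD α (f i) p := by
  simp [partialD, fderiv_fun_sum hf]

theorem partialD_const (c : ℝ) : partialD α (fun _ => c) p = 0 := by
  simp [partialD]

theorem partialD_time : partialD α Prod.fst p = α.elim 1 fun _ => 0 := by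
  cases α <;> simp [partialD, coordDir, fderiv_fst]

theorem partialD_coord (i : Fin 3) :
    partialD α (fun q : ℝ × Pt => q.2 i) p = α.elim 0 fun j => if i = j then 1 else 0 := by
  have : HasFDerivAt (fun q : ℝ × Pt => q.2 i)
      ((EuclideanSpace.proj i).comp (ContinuousLinearMap.snd ℝ ℝ Pt)) p :=
    ((EuclideanSpace.proj (𝕜 := ℝ) i).comp (ContinuousLinearMap.snd ℝ ℝ Pt)).hasFDerivAt
  cases α <;> simp [partialD, coordDir, this.fderiv]

theorem partialD_normSq :
    partialD α (fun q : ℝ × Pt => ‖q.2‖ ^ 2) p = α.elim 0 fun i => 2 * p.2 i := by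
  have : HasFDerivAt (fun q : ℝ × Pt => ‖q.2‖ ^ 2) _ p := hasFDerivAt_snd.norm_sq
  cases α <;> simp [partialD, coordDir, this.fderiv, EuclideanSpace.inner_single_right]

end LeibnizRules

section ConformalCurrent

variable (u : ℝ × Pt → ℝ)

/-- `½(⟨t+r⟩² + ⟨t-r⟩²) = 1 + t² + r²`, the time component of the conformal vector field `K̄₀`. -/
def conformalWeight (p : ℝ × Pt) : ℝ := 1 + p.1 ^ 2 + ‖p.2‖ ^ 2

/-- The Euler field `∑ xᵢ∂ᵢu = r∂_r u`. -/
def eulerD (p : ℝ × Pt) : ℝ := ∑ i, p.2 i * partialD (some i) u p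

/-- The Lagrangian density `|∇u|² - (∂_t u)²`. -/
def lagrangian (p : ℝ × Pt) : ℝ := ∑ i, partialD (some i) u p ^ 2 - partialD none u p ^ 2

/-- The multiplier `(2/r)K̄₀(ru)` of the conformal energy identity. -/
def conformalMultiplier (p : ℝ × Pt) : ℝ :=
  2 * conformalWeight p * partialD none u p + 4 * p.1 * (eulerD u p + u p)

/-- Half of the integrand of the unweighted conformal energy, for `x ≠ 0`. -/
def conformalDensity (p : ℝ × Pt) : ℝ :=
  conformalMultiplier u p * partialD none u p + conformalWeight p * lagrangian u p
    + conformalWeight p * (2 * u p * eulerD u p + u p ^ 2) * (‖p.2‖ ^ 2)⁻¹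

/-- The coefficient of the radial field `x` in the conformal energy flux. -/
def conformalFluxCoeff (p : ℝ × Pt) : ℝ :=
  (2 * p.1 * u p ^ 2 + 2 * conformalWeight p * u p * partialD none u p) * (‖p.2‖ ^ 2)⁻¹
    - 2 * p.1 * lagrangian u p

/-- The current of the conformal energy identity. -/
def conformalCurrent : Ix → ℝ × Pt → ℝ
  | none => conformalDensity u
  | some i => fun p =>
    -(conformalMultiplier u p * partialD (some i) u p + conformalFluxCoeff u p * p.2 i)

/-- The wave operator `□u = -∂_t²u + Δu`, uncurried. -/
def waveOp (p : ℝ × Pt) : ℝ :=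
  -partialD none (partialD none u) p + ∑ i, partialD (some i) (partialD (some i) u) p

variable {u}

theorem contDiff_conformalWeight {n : WithTop ℕ∞} : ContDiff ℝ n conformalWeight :=
  (contDiff_const.add (contDiff_fst.pow 2)).add (contDiff_snd.norm_sq ℝ)

theorem contDiff_eulerD (hu : ContDiff ℝ 2 u) : ContDiff ℝ 1 (eulerD u) :=
  ContDiff.sum fun i _ => ContDiff.mul (by fun_prop) (contDiff_partialD hu le_rfl (some i))

theorem contDiff_lagrangian (hu : ContDiff ℝ 2 u) : ContDiff ℝ 1 (lagrangian u) :=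
  (ContDiff.sum fun i _ => (contDiff_partialD hu le_rfl (some i)).pow 2).sub
    ((contDiff_partialD hu le_rfl none).pow 2)

theorem contDiff_conformalMultiplier (hu : ContDiff ℝ 2 u) : ContDiff ℝ 1 (conformalMultiplier u) :=
  ((contDiff_const.mul contDiff_conformalWeight).mul (contDiff_partialD hu le_rfl none)).add
    ((contDiff_const.mul contDiff_fst).mul ((contDiff_eulerD hu).add (hu.of_le one_le_two)))

theorem contDiffAt_inv_normSq {p : ℝ × Pt} (hp : p.2 ≠ 0) {n : WithTop ℕ∞} :
    ContDiffAt ℝ n (fun q : ℝ × Pt => (‖q.2‖ ^ 2)⁻¹) p :=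
  (contDiffAt_snd.norm_sq ℝ).inv (by simpa using hp)

theorem contDiffAt_conformalFluxCoeff (hu : ContDiff ℝ 2 u) {p : ℝ × Pt} (hp : p.2 ≠ 0) :
    ContDiffAt ℝ 1 (conformalFluxCoeff u) p := by
  have := (hu.of_le one_le_two).contDiffAt (x := p)
  have := (contDiff_partialD (m := 1) hu le_rfl none).contDiffAt (x := p)
  have := (contDiff_lagrangian hu).contDiffAt (x := p)
  have := contDiff_conformalWeight.contDiffAt (x := p) (n := 1)
  have := contDiffAt_inv_normSq hp (n := 1)
  unfold conformalFluxCoeff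
  fun_prop

theorem contDiffAt_conformalCurrent (hu : ContDiff ℝ 2 u) {p : ℝ × Pt} (hp : p.2 ≠ 0) (α : Ix) :
    ContDiffAt ℝ 1 (conformalCurrent u α) p := by
  have := (hu.of_le one_le_two).contDiffAt (x := p)
  have := fun α => (contDiff_partialD (m := 1) hu le_rfl α).contDiffAt (x := p)
  have := (contDiff_lagrangian hu).contDiffAt (x := p)
  have := (contDiff_eulerD hu).contDiffAt (x := p)
  have := (contDiff_conformalMultiplier hu).contDiffAt (x := p)
  have := contDiffAt_conformalFluxCoeff hu hp
  have := contDiff_conformalWeight.contDiffAt (x := p) (n := 1)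
  have := contDiffAt_inv_normSq hp (n := 1)
  cases α
  · unfold conformalCurrent conformalDensity
    fun_prop
  · unfold conformalCurrent
    fun_prop

theorem partialD_conformalWeight (α : Ix) (p : ℝ × Pt) :
    partialD α conformalWeight p = 2 * α.elim p.1 p.2 := by
  have := (contDiff_snd (E := ℝ) (F := Pt) (n := 1)).norm_sq ℝ |>.differentiable one_ne_zero p
  unfold conformalWeight
  simp (disch := fun_prop) only [partialD_add, partialD_const, partialD_pow, partialD_time,
    partialD_normSq]
  cases α <;> simp

theorem partialD_eulerD (hu : ContDiff ℝ 2 u) (α : Ix) (p : ℝ × Pt) :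
    partialD α (eulerD u) p =
      eulerD (partialD α u) p + α.elim 0 fun i => partialD (some i) u p := by
  have hD (β : Ix) : DifferentiableAt ℝ (partialD β u) p :=
    (contDiff_partialD (m := 1) hu le_rfl β).differentiable one_ne_zero p
  unfold eulerD
  simp (disch := fun_prop) only [partialD_sum, partialD_mul, partialD_coord, Finset.sum_add_distrib,
    partialD_comm hu α]
  cases α <;> simp

theorem partialD_lagrangian (hu : ContDiff ℝ 2 u) (α : Ix) (p : ℝ × Pt) :
    partialD α (lagrangian u) p =
      2 * ((∑ i, partialD (some i) u p * partialD (some i) (partialD α u) p)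
        - partialD none u p * partialD none (partialD α u) p) := by
  have hD (β : Ix) : DifferentiableAt ℝ (partialD β u) p :=
    (contDiff_partialD (m := 1) hu le_rfl β).differentiable one_ne_zero p
  unfold lagrangian
  simp (disch := fun_prop) only [partialD_sub, partialD_sum, partialD_pow, partialD_comm hu α]
  simp only [Nat.cast_ofNat, Nat.add_one_sub_one, pow_one, mul_assoc, mul_sub, Finset.mul_sum]

theorem partialD_conformalMultiplier (hu : ContDiff ℝ 2 u) (α : Ix) (p : ℝ × Pt) :
    partialD α (conformalMultiplier u) p =
      4 * (α.elim p.1 p.2 * partialD none u p + α.elim (eulerD u p + u p) fun _ => 0)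
        + 2 * conformalWeight p * partialD α (partialD none u) p
        + 4 * p.1 * (eulerD (partialD α u) p + partialD α u p
          + α.elim 0 fun i => partialD (some i) u p) := by
  have hu1 : DifferentiableAt ℝ u p := hu.differentiable two_ne_zero p
  have hD : DifferentiableAt ℝ (partialD none u) p :=
    (contDiff_partialD (m := 1) hu le_rfl none).differentiable one_ne_zero p
  have hX := (contDiff_eulerD hu).differentiable one_ne_zero p
  have hc := contDiff_conformalWeight.differentiable one_ne_zero p
  unfold conformalMultiplier
  simp (disch := fun_prop) only [partialD_add, partialD_mul, partialD_const, partialD_time,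
    partialD_conformalWeight, partialD_eulerD hu]
  cases α <;> simp only [Option.elim] <;> ring

theorem sum_partialD_conformalCurrent (hu : ContDiff ℝ 2 u) {p : ℝ × Pt} (hp : p.2 ≠ 0) :
    ∑ α, partialD α (conformalCurrent u α) p = -(conformalMultiplier u p * waveOp u p) := by
  have hu1 : DifferentiableAt ℝ u p := hu.differentiable two_ne_zero p
  have hD (α : Ix) : DifferentiableAt ℝ (partialD α u) p :=
    (contDiff_partialD (m := 1) hu le_rfl α).differentiable one_ne_zero p
  have hr : ‖p.2‖ ^ 2 ≠ 0 := by simpa using hp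
  have hr' : DifferentiableAt ℝ (fun q : ℝ × Pt => ‖q.2‖ ^ 2) p := differentiableAt_snd.norm_sq ℝ
  have hri := (contDiffAt_inv_normSq hp).differentiableAt one_ne_zero
  have hX := (contDiff_eulerD hu).differentiable one_ne_zero p
  have hΛ := (contDiff_lagrangian hu).differentiable one_ne_zero p
  have hM := (contDiff_conformalMultiplier hu).differentiable one_ne_zero p
  have hN := (contDiffAt_conformalFluxCoeff hu hp).differentiableAt one_ne_zero
  have hc := contDiff_conformalWeight.differentiable one_ne_zero p
  simp only [Fintype.sum_option, conformalCurrent]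
  simp (disch := fun_prop) only [partialD_neg, partialD_add, partialD_mul, partialD_coord]
  unfold conformalDensity conformalFluxCoeff
  simp (disch := first | assumption | fun_prop) only [partialD_add, partialD_sub, partialD_mul,
    partialD_pow, partialD_inv, partialD_const, partialD_time, partialD_normSq,
    partialD_conformalWeight, partialD_conformalMultiplier hu, partialD_lagrangian hu,
    partialD_eulerD hu]
  have hcomm (i j : Fin 3) := partialD_comm hu (some i) (some j) p
  have hcommT (i : Fin 3) := partialD_comm hu none (some i) p
  unfold conformalMultiplier waveOp
  simp only [EuclideanSpace.real_norm_sq_eq, eulerD, lagrangian, Fin.sum_univ_three,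
    Option.elim, if_true, hcomm 1 0, hcomm 2 0, hcomm 2 1, hcommT] at hr ⊢
  field_simp
  ring

end ConformalCurrent

section Slices

variable {E F : Type*} [NormedAddCommGroup E] [NormedSpace ℝ E] [NormedAddCommGroup F]
  [NormedSpace ℝ F] {f : ℝ × E → F} {t : ℝ} {x : E}

theorem hasDerivAt_slice_fst (hf : DifferentiableAt ℝ f (t, x)) :
    HasDerivAt (fun s => f (s, x)) (fderiv ℝ f (t, x) (1, 0)) t :=
  (hf.hasFDerivAt.comp t (hasFDerivAt_prodMk_left t x)).hasDerivAt.congr_deriv (by simp)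

theorem fderiv_slice_snd (hf : DifferentiableAt ℝ f (t, x)) (v : E) :
    fderiv ℝ (fun y => f (t, y)) x v = fderiv ℝ f (t, x) (0, v) := by
  have := (hf.hasFDerivAt.comp x (hasFDerivAt_prodMk_right t x)).fderiv
  rw [show (fun y => f (t, y)) = f ∘ fun y => (t, y) from rfl, this]
  simp

end Slices

section IntegralSlices

variable {E F : Type*} [NormedAddCommGroup E] [MeasurableSpace E] [OpensMeasurableSpace E]
  {μ : Measure E} [IsFiniteMeasureOnCompacts μ] [NormedAddCommGroup F]
  {f : ℝ × E → F} {t₁ t₂ : ℝ} {K : Set E}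

theorem integrableOn_Ioc_prod_of_continuous (hf : Continuous f) (t₁ t₂ : ℝ) (hK : IsCompact K) :
    IntegrableOn f (Set.Ioc t₁ t₂ ×ˢ K) (volume.prod μ) :=
  (hf.continuousOn.integrableOn_compact (isCompact_Icc.prod hK)).mono_set
    (Set.prod_mono Set.Ioc_subset_Icc_self le_rfl)

theorem setIntegral_prod_fderiv_fst [SFinite μ] [NormedSpace ℝ E] [NormedSpace ℝ F]
    [CompleteSpace F] (hf : ContDiff ℝ 1 f) (h : t₁ ≤ t₂) (hK : IsCompact K) :
    ∫ p in Set.Ioc t₁ t₂ ×ˢ K, fderiv ℝ f p (1, 0) ∂(volume.prod μ) =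
      (∫ x in K, f (t₂, x) ∂μ) - ∫ x in K, f (t₁, x) ∂μ := by
  have hf' : Continuous fun p => fderiv ℝ f p (1, 0) :=
    (hf.continuous_fderiv one_ne_zero).clm_apply continuous_const
  have hslice (t : ℝ) : IntegrableOn (fun x => f (t, x)) K μ :=
    (hf.continuous.comp (by fun_prop)).continuousOn.integrableOn_compact hK
  have hint := integrableOn_Ioc_prod_of_continuous (μ := μ) hf' t₁ t₂ hK
  rw [setIntegral_prod _ hint, integral_integral_swap (by rwa [Measure.prod_restrict]),
    ← integral_sub (hslice t₂) (hslice t₁)]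
  congr with x
  rw [← intervalIntegral.integral_of_le h]
  exact intervalIntegral.integral_eq_sub_of_hasDerivAt
    (fun t _ => hasDerivAt_slice_fst (hf.differentiable one_ne_zero (t, x)))
    ((hf'.comp (by fun_prop)).intervalIntegrable _ _)

end IntegralSlices

section DivergenceTheorem

variable {E F : Type*} [NormedAddCommGroup E] [NormedSpace ℝ E] [FiniteDimensional ℝ E]
  [MeasurableSpace E] [BorelSpace E] {μ : Measure E} [μ.IsAddHaarMeasure]
  [NormedAddCommGroup F] [NormedSpace ℝ F]

theorem integral_fderiv_apply_eq_zero {f : E → F} (hf : ContDiff ℝ 1 f)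
    (hc : HasCompactSupport f) (v : E) : ∫ x, fderiv ℝ f x v ∂μ = 0 := by
  have hf' : Continuous fun x => fderiv ℝ f x v :=
    (hf.continuous_fderiv one_ne_zero).clm_apply continuous_const
  simpa using integral_smul_fderiv_eq_neg_fderiv_smul_of_integrable (μ := μ) (𝕜 := ℝ)
    (f := fun _ => (1 : ℝ)) (g := f) (v := v) (by simp)
    (by simpa using hf'.integrable_of_hasCompactSupport (hc.fderiv_apply ℝ v))
    (by simpa using hf.continuous.integrable_of_hasCompactSupport hc)
    (fun _ _ => differentiableAt_const _) fun x _ => hf.differentiable one_ne_zero x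

theorem setIntegral_closedBall_fderiv_apply_eq_zero {f : E → F} (hf : ContDiff ℝ 1 f) {R : ℝ}
    (hR : ∀ x, R ≤ ‖x‖ → f x = 0) (v : E) :
    ∫ x in Metric.closedBall 0 R, fderiv ℝ f x v ∂μ = 0 := by
  have hc : HasCompactSupport f :=
    HasCompactSupport.intro (isCompact_closedBall (0 : E) R) fun x hx =>
      hR x (not_le.1 (mt mem_closedBall_zero_iff.2 hx)).le
  rw [setIntegral_eq_integral_of_forall_compl_eq_zero, integral_fderiv_apply_eq_zero hf hc]
  intro x hx
  have hxR : R < ‖x‖ := not_le.1 (mt mem_closedBall_zero_iff.2 hx)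
  have : f =ᶠ[𝓝 x] fun _ => 0 :=
    Filter.mem_of_superset ((isOpen_lt continuous_const continuous_norm).mem_nhds hxR)
      fun y hy => hR y (le_of_lt hy)
  simp [this.fderiv_eq]

theorem setIntegral_prod_fderiv_snd_eq_zero {f : ℝ × E → F} (hf : ContDiff ℝ 1 f)
    {t₁ t₂ R : ℝ} (hR : ∀ t ∈ Set.Ioc t₁ t₂, ∀ x, R ≤ ‖x‖ → f (t, x) = 0) (v : E) :
    ∫ p in Set.Ioc t₁ t₂ ×ˢ Metric.closedBall 0 R, fderiv ℝ f p (0, v) ∂(volume.prod μ) = 0 := by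
  have hf' : Continuous fun p => fderiv ℝ f p (0, v) :=
    (hf.continuous_fderiv one_ne_zero).clm_apply continuous_const
  rw [setIntegral_prod _
    (integrableOn_Ioc_prod_of_continuous hf' t₁ t₂ (isCompact_closedBall _ _))]
  refine setIntegral_eq_zero_of_forall_eq_zero fun t ht => ?_
  simp_rw [← fderiv_slice_snd (hf.differentiable one_ne_zero _)]
  exact setIntegral_closedBall_fderiv_apply_eq_zero (hf.comp (by fun_prop)) (hR t ht) v

end DivergenceTheorem

/-- The spacetime cylinder `(t₁, t₂] × {|x| ≤ R}`. -/
def spacetimeCylinder (t₁ t₂ R : ℝ) : Set (ℝ × Pt) := Set.Ioc t₁ t₂ ×ˢ Metric.closedBall 0 R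

theorem setIntegral_spacetimeCylinder_sum_partialD {V : Ix → ℝ × Pt → ℝ}
    (hV : ∀ α, ContDiff ℝ 1 (V α)) {t₁ t₂ R : ℝ} (h : t₁ ≤ t₂)
    (hR : ∀ α, ∀ t ∈ Set.Ioc t₁ t₂, ∀ x, R ≤ ‖x‖ → V α (t, x) = 0) :
    ∫ p in spacetimeCylinder t₁ t₂ R, ∑ α, partialD α (V α) p =
      (∫ x in Metric.closedBall 0 R, V none (t₂, x))
        - ∫ x in Metric.closedBall 0 R, V none (t₁, x) := by
  have hint (α : Ix) : IntegrableOn (partialD α (V α)) (spacetimeCylinder t₁ t₂ R) :=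
    integrableOn_Ioc_prod_of_continuous (contDiff_partialD (m := 0) (hV α) (by simp) α).continuous
      t₁ t₂ (isCompact_closedBall 0 R)
  rw [integral_finsetSum _ fun α _ => hint α, Fintype.sum_option]
  have hspace (i : Fin 3) :
      ∫ p in spacetimeCylinder t₁ t₂ R, partialD (some i) (V (some i)) p = 0 :=
    setIntegral_prod_fderiv_snd_eq_zero (hV (some i)) (hR (some i)) _
  have htime := setIntegral_prod_fderiv_fst (μ := (volume : Measure Pt)) (hV none) h
    (isCompact_closedBall 0 R)
  rw [← htime, Finset.sum_congr rfl fun i _ => hspace i, Finset.sum_const_zero, add_zero]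
  rfl

theorem setIntegral_weighted_current {J : Ix → ℝ × Pt → ℝ} {χ : ℝ × Pt → ℝ} {ε t₁ t₂ R : ℝ}
    (hJ : ∀ α p, p.2 ≠ 0 → ContDiffAt ℝ 1 (J α) p) (hχ : ContDiff ℝ 1 χ) (hε : 0 < ε)
    (hχε : ∀ p, ‖p.2‖ < ε → χ p = 0) (h : t₁ ≤ t₂)
    (hχR : ∀ t ∈ Set.Ioc t₁ t₂, ∀ x, R ≤ ‖x‖ → χ (t, x) = 0) :
    (∫ x in Metric.closedBall 0 R, χ (t₁, x) * J none (t₁, x))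
        - ∫ x in Metric.closedBall 0 R, χ (t₂, x) * J none (t₂, x) =
      -∫ p in spacetimeCylinder t₁ t₂ R,
        (χ p * ∑ α, partialD α (J α) p + ∑ α, partialD α χ p * J α p) := by
  have near_axis {p : ℝ × Pt} (hp : ‖p.2‖ < ε) : χ =ᶠ[𝓝 p] fun _ => 0 :=
    Filter.mem_of_superset ((isOpen_lt continuous_snd.norm continuous_const).mem_nhds hp)
      fun q hq => hχε q hq
  have hV (α : Ix) : ContDiff ℝ 1 fun p => χ p * J α p := by
    refine contDiff_iff_contDiffAt.2 fun p => ?_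
    rcases eq_or_ne p.2 0 with hp | hp
    · refine (contDiffAt_const (c := (0 : ℝ))).congr_of_eventuallyEq ?_
      filter_upwards [near_axis (p := p) (by simpa [hp] using hε)] with q hq
      rw [hq, zero_mul]
    · exact hχ.contDiffAt.mul (hJ α p hp)
  have hdiv (p : ℝ × Pt) : ∑ α, partialD α (fun q => χ q * J α q) p =
      χ p * ∑ α, partialD α (J α) p + ∑ α, partialD α χ p * J α p := by
    rw [Finset.mul_sum, ← Finset.sum_add_distrib]
    refine Finset.sum_congr rfl fun α _ => ?_
    rcases eq_or_ne p.2 0 with hp | hp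
    · have hχ0 := near_axis (p := p) (by simpa [hp] using hε)
      have hV0 : (fun q => χ q * J α q) =ᶠ[𝓝 p] fun _ => 0 := by
        filter_upwards [hχ0] with q hq
        rw [hq, zero_mul]
      simp [partialD, hχ0.fderiv_eq, hV0.fderiv_eq, hχ0.eq_of_nhds]
    · rw [partialD_mul (hχ.differentiable one_ne_zero p)
        ((hJ α p hp).differentiableAt one_ne_zero), mul_comm (J α p)]
  have := setIntegral_spacetimeCylinder_sum_partialD hV h
    fun α t ht x hx => by rw [hχR t ht x hx, zero_mul]
  simp_rw [hdiv] at this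
  linarith

section NullFluxes

variable (u : ℝ × Pt → ℝ)

/-- `|∂̸u|²`, computed from the gradient by Pythagoras; the divisor is `r²`. -/
def angularSq (p : ℝ × Pt) : ℝ := ∑ i, partialD (some i) u p ^ 2 - eulerD u p ^ 2 / ‖p.2‖ ^ 2

/-- The flux `⟨t+r⟩²|L(ru)/r|² + ⟨t-r⟩²|∂̸u|²` of the current through outgoing null cones. -/
def outgoingFlux (p : ℝ × Pt) : ℝ :=
  (conformalWeight p + 2 * p.1 * ‖p.2‖) * (partialD none u p + (eulerD u p + u p) / ‖p.2‖) ^ 2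
    + (conformalWeight p - 2 * p.1 * ‖p.2‖) * angularSq u p

/-- The flux `⟨t-r⟩²|L̲(ru)/r|² + ⟨t+r⟩²|∂̸u|²` of the current through incoming null cones. -/
def incomingFlux (p : ℝ × Pt) : ℝ :=
  (conformalWeight p - 2 * p.1 * ‖p.2‖) * (partialD none u p - (eulerD u p + u p) / ‖p.2‖) ^ 2
    + (conformalWeight p + 2 * p.1 * ‖p.2‖) * angularSq u p

variable {u} {p : ℝ × Pt}

theorem conformalDensity_eq (hp : p.2 ≠ 0) :
    conformalDensity u p = (outgoingFlux u p + incomingFlux u p) / 2 := by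
  have hr : ‖p.2‖ ≠ 0 := norm_ne_zero_iff.2 hp
  unfold conformalDensity conformalMultiplier outgoingFlux incomingFlux angularSq lagrangian
  field_simp
  ring

theorem sum_coord_mul_conformalCurrent_eq (u : ℝ × Pt → ℝ) (p : ℝ × Pt) :
    ∑ i, p.2 i * conformalCurrent u (some i) p =
      -(conformalMultiplier u p * eulerD u p + conformalFluxCoeff u p * ‖p.2‖ ^ 2) := by
  rw [EuclideanSpace.real_norm_sq_eq, eulerD, Finset.mul_sum, Finset.mul_sum,
    ← Finset.sum_add_distrib, ← Finset.sum_neg_distrib]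
  exact Finset.sum_congr rfl fun i _ => by simp only [conformalCurrent]; ring

theorem sum_coord_mul_conformalCurrent (hp : p.2 ≠ 0) :
    ∑ i, p.2 i * conformalCurrent u (some i) p =
      -(‖p.2‖ * (outgoingFlux u p - incomingFlux u p) / 2) := by
  have hr : ‖p.2‖ ≠ 0 := norm_ne_zero_iff.2 hp
  rw [sum_coord_mul_conformalCurrent_eq]
  unfold conformalFluxCoeff conformalMultiplier outgoingFlux incomingFlux angularSq lagrangian
  field_simp
  ring

end NullFluxes

section ComplexSolutions

variable {φ : ℝ → Pt → ℂ} {t : ℝ} {x : Pt}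

theorem dT_eq_partialD (hφ : Differentiable ℝ (Function.uncurry φ)) (t : ℝ) (x : Pt) :
    dT φ t x = partialD none (Function.uncurry φ) (t, x) :=
  (hasDerivAt_slice_fst (hφ (t, x))).deriv

theorem dX_eq_partialD (hφ : Differentiable ℝ (Function.uncurry φ)) (i : Fin 3) (t : ℝ) (x : Pt) :
    dX i φ t x = partialD (some i) (Function.uncurry φ) (t, x) :=
  fderiv_slice_snd (hφ (t, x)) _

theorem uncurry_dT (hφ : Differentiable ℝ (Function.uncurry φ)) :
    Function.uncurry (dT φ) = partialD none (Function.uncurry φ) :=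
  funext fun p => dT_eq_partialD hφ p.1 p.2

theorem uncurry_dX (hφ : Differentiable ℝ (Function.uncurry φ)) (i : Fin 3) :
    Function.uncurry (dX i φ) = partialD (some i) (Function.uncurry φ) :=
  funext fun p => dX_eq_partialD hφ i p.1 p.2

/-- The real-valued function `l ∘ φ` of the point `(t, x)`, for `l` the real or imaginary part: the
conformal energy of `φ` is the sum of the energies of its two parts. -/
def part (l : ℂ →L[ℝ] ℝ) (φ : ℝ → Pt → ℂ) (p : ℝ × Pt) : ℝ := l (φ p.1 p.2)

theorem contDiff_part {n : WithTop ℕ∞} (hφ : ContDiff ℝ n (Function.uncurry φ)) (l : ℂ →L[ℝ] ℝ) :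
    ContDiff ℝ n (part l φ) := l.contDiff.comp hφ

theorem partialD_part (hφ : Differentiable ℝ (Function.uncurry φ)) (l : ℂ →L[ℝ] ℝ) (α : Ix)
    (p : ℝ × Pt) : partialD α (part l φ) p = l (partialD α (Function.uncurry φ) p) :=
  partialD_clm_comp l (hφ p) α

theorem part_dT (hφ : Differentiable ℝ (Function.uncurry φ)) (l : ℂ →L[ℝ] ℝ) :
    part l (dT φ) = partialD none (part l φ) :=
  funext fun p => by rw [partialD_part hφ, part, dT_eq_partialD hφ]

theorem part_dX (hφ : Differentiable ℝ (Function.uncurry φ)) (l : ℂ →L[ℝ] ℝ) (i : Fin 3) :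
    part l (dX i φ) = partialD (some i) (part l φ) :=
  funext fun p => by rw [partialD_part hφ, part, dX_eq_partialD hφ]

theorem part_box (hφ : ContDiff ℝ 2 (Function.uncurry φ)) (l : ℂ →L[ℝ] ℝ) :
    part l (box φ) = waveOp (part l φ) := by
  have hφ₁ : Differentiable ℝ (Function.uncurry φ) := hφ.differentiable two_ne_zero
  have hT : Differentiable ℝ (Function.uncurry (dT φ)) := by
    rw [uncurry_dT hφ₁]
    exact (contDiff_partialD (m := 1) hφ le_rfl none).differentiable one_ne_zero
  have hX (i : Fin 3) : Differentiable ℝ (Function.uncurry (dX i φ)) := by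
    rw [uncurry_dX hφ₁]
    exact (contDiff_partialD (m := 1) hφ le_rfl (some i)).differentiable one_ne_zero
  funext p
  simp_rw [waveOp, ← part_dT hφ₁, ← part_dX hφ₁, ← part_dT hT, ← part_dX (hX _)]
  simp [part, box]

theorem jb_sq (a : ℝ) : jb a ^ 2 = 1 + a ^ 2 := Real.sq_sqrt (by positivity)

theorem dT_rmul (φ : ℝ → Pt → ℂ) (t : ℝ) (x : Pt) : dT (rmul φ) t x = (rad x : ℂ) * dT φ t x :=
  deriv_const_mul_field _

theorem fderiv_norm_single (hx : x ≠ 0) (i : Fin 3) :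
    fderiv ℝ (fun y : Pt => ‖y‖) x (EuclideanSpace.single i 1) = x i / ‖x‖ := by
  have hd : DifferentiableAt ℝ (fun y : Pt => ‖y‖) x := differentiableAt_id.norm ℝ hx
  have hsq : 2 * ‖x‖ * fderiv ℝ (fun y : Pt => ‖y‖) x (EuclideanSpace.single i 1) = 2 * x i := by
    have := (hd.hasFDerivAt.pow 2).unique (hasStrictFDerivAt_norm_sq x).hasFDerivAt
    simpa [EuclideanSpace.inner_single_right] using
      DFunLike.congr_fun this (EuclideanSpace.single i 1)
  rw [eq_div_iff (norm_ne_zero_iff.2 hx)]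
  linarith

theorem dX_rmul (hφ : DifferentiableAt ℝ (φ t) x) (hx : x ≠ 0) (i : Fin 3) :
    dX i (rmul φ) t x = (x i / rad x : ℝ) * φ t x + (rad x : ℂ) * dX i φ t x := by
  have hd : DifferentiableAt ℝ (fun y : Pt => ‖y‖) x := differentiableAt_id.norm ℝ hx
  have hr : HasFDerivAt (fun y : Pt => (‖y‖ : ℂ)) _ x :=
    Complex.ofRealCLM.hasFDerivAt.comp x hd.hasFDerivAt
  rw [dX, show (fun y => rmul φ t y) = (fun y : Pt => (‖y‖ : ℂ)) * φ t from rfl,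
    (hr.mul hφ.hasFDerivAt).fderiv]
  simp only [add_apply, smul_apply,
    ContinuousLinearMap.comp_apply, Complex.ofRealCLM_apply, fderiv_norm_single hx, smul_eq_mul,
    dX, rad]
  ring

theorem dR_rmul (hφ : DifferentiableAt ℝ (φ t) x) (hx : x ≠ 0) :
    dR (rmul φ) t x = φ t x + ∑ i, (x i : ℂ) * dX i φ t x := by
  have hr : (rad x : ℂ) ≠ 0 := mod_cast norm_ne_zero_iff.2 hx
  have hsq : ∑ i, (x i : ℂ) ^ 2 = (rad x : ℂ) ^ 2 := by
    rw [rad]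
    exact_mod_cast (EuclideanSpace.real_norm_sq_eq x).symm
  have hterm (i : Fin 3) : (x i : ℂ) * dX i (rmul φ) t x =
      (x i : ℂ) ^ 2 * (φ t x / rad x) + rad x * ((x i : ℂ) * dX i φ t x) := by
    rw [dX_rmul hφ hx]
    push_cast
    field_simp
  rw [dR, Finset.sum_congr rfl fun i _ => hterm i, Finset.sum_add_distrib, ← Finset.sum_mul,
    ← Finset.mul_sum, hsq]
  field_simp

theorem clm_ofReal_mul (l : ℂ →L[ℝ] ℝ) (a : ℝ) (z : ℂ) : l (a * z) = a * l z := by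
  rw [← Complex.real_smul, map_smul, smul_eq_mul]

theorem clm_div_ofReal (l : ℂ →L[ℝ] ℝ) (a : ℝ) (z : ℂ) : l (z / a) = l z / a := by
  rw [div_eq_inv_mul, ← Complex.ofReal_inv, clm_ofReal_mul, div_eq_inv_mul]

theorem eulerD_part (hφ : Differentiable ℝ (Function.uncurry φ)) (l : ℂ →L[ℝ] ℝ) (t : ℝ) (x : Pt) :
    eulerD (part l φ) (t, x) = l (∑ i, (x i : ℂ) * dX i φ t x) := by
  simp only [eulerD, map_sum, clm_ofReal_mul, partialD_part hφ, dX_eq_partialD hφ]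

theorem clm_dR_rmul (hφ : Differentiable ℝ (Function.uncurry φ)) (hx : x ≠ 0) (l : ℂ →L[ℝ] ℝ) :
    l (dR (rmul φ) t x) = eulerD (part l φ) (t, x) + part l φ (t, x) := by
  have hslice : DifferentiableAt ℝ (φ t) x :=
    DifferentiableAt.comp x (g := Function.uncurry φ) (f := Prod.mk t) (hφ _) (by fun_prop)
  rw [dR_rmul hslice hx, map_add, eulerD_part hφ, add_comm, part]

theorem clm_dT_rmul (hφ : Differentiable ℝ (Function.uncurry φ)) (l : ℂ →L[ℝ] ℝ) (t : ℝ) (x : Pt) :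
    l (dT (rmul φ) t x) = ‖x‖ * partialD none (part l φ) (t, x) := by
  rw [dT_rmul, clm_ofReal_mul, rad, ← part_dT hφ, part]

theorem clm_dL_rmul_div (hφ : Differentiable ℝ (Function.uncurry φ)) (hx : x ≠ 0)
    (l : ℂ →L[ℝ] ℝ) : l (dL (rmul φ) t x / rad x) = partialD none (part l φ) (t, x) +
      (eulerD (part l φ) (t, x) + part l φ (t, x)) / ‖x‖ := by
  have hr : ‖x‖ ≠ 0 := norm_ne_zero_iff.2 hx
  rw [clm_div_ofReal, dL, map_add, clm_dT_rmul hφ, clm_dR_rmul hφ hx, rad]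
  field_simp

theorem clm_dLbar_rmul_div (hφ : Differentiable ℝ (Function.uncurry φ)) (hx : x ≠ 0)
    (l : ℂ →L[ℝ] ℝ) : l (dLbar (rmul φ) t x / rad x) = partialD none (part l φ) (t, x) -
      (eulerD (part l φ) (t, x) + part l φ (t, x)) / ‖x‖ := by
  have hr : ‖x‖ ≠ 0 := norm_ne_zero_iff.2 hx
  rw [clm_div_ofReal, dLbar, map_sub, clm_dT_rmul hφ, clm_dR_rmul hφ hx, rad]
  field_simp

theorem clm_two_div_mul_K0r (hφ : Differentiable ℝ (Function.uncurry φ)) (hx : x ≠ 0)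
    (l : ℂ →L[ℝ] ℝ) : l (2 / (rad x : ℂ) * K0r φ t x) = conformalMultiplier (part l φ) (t, x) := by
  have hr : ‖x‖ ≠ 0 := norm_ne_zero_iff.2 hx
  rw [show 2 / (rad x : ℂ) * K0r φ t x = ((jb (t + rad x) ^ 2 : ℝ) * (dL (rmul φ) t x / rad x) +
      (jb (t - rad x) ^ 2 : ℝ) * (dLbar (rmul φ) t x / rad x)) by rw [K0r]; ring,
    map_add, clm_ofReal_mul, clm_ofReal_mul, clm_dL_rmul_div hφ hx, clm_dLbar_rmul_div hφ hx,
    jb_sq, jb_sq, rad, conformalMultiplier, conformalWeight]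
  field_simp
  ring

theorem sum_clm_dAng_sq (hφ : Differentiable ℝ (Function.uncurry φ)) (hx : x ≠ 0)
    (l : ℂ →L[ℝ] ℝ) : ∑ i, l (dAng i φ t x) ^ 2 = angularSq (part l φ) (t, x) := by
  have hr : ‖x‖ ≠ 0 := norm_ne_zero_iff.2 hx
  have hang (i : Fin 3) : l (dAng i φ t x) =
      partialD (some i) (part l φ) (t, x) - x i * eulerD (part l φ) (t, x) / ‖x‖ ^ 2 := by
    rw [dAng, map_sub, clm_ofReal_mul, dR, ← Complex.ofReal_inv, clm_ofReal_mul, eulerD_part hφ,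
      partialD_part hφ, dX_eq_partialD hφ, rad]
    field_simp
  have hcross : ∑ i, x i * partialD (some i) (part l φ) (t, x) = eulerD (part l φ) (t, x) := rfl
  have expand (i : Fin 3) : (partialD (some i) (part l φ) (t, x)
      - x i * eulerD (part l φ) (t, x) / ‖x‖ ^ 2) ^ 2 =
      partialD (some i) (part l φ) (t, x) ^ 2
      - 2 * eulerD (part l φ) (t, x) / ‖x‖ ^ 2 * (x i * partialD (some i) (part l φ) (t, x))
      + (eulerD (part l φ) (t, x) / ‖x‖ ^ 2) ^ 2 * x i ^ 2 := by ring
  simp_rw [hang, expand]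
  rw [Finset.sum_add_distrib, Finset.sum_sub_distrib, ← Finset.mul_sum, ← Finset.mul_sum, hcross,
    ← EuclideanSpace.real_norm_sq_eq, angularSq]
  field_simp
  ring

theorem norm_sq_eq_reCLM_add_imCLM (z : ℂ) :
    ‖z‖ ^ 2 = Complex.reCLM z ^ 2 + Complex.imCLM z ^ 2 := by
  rw [Complex.sq_norm, Complex.normSq_apply, Complex.reCLM_apply, Complex.imCLM_apply]
  ring

theorem angSq_eq_angularSq_add (hφ : Differentiable ℝ (Function.uncurry φ)) (hx : x ≠ 0) :
    angSq φ t x = angularSq (part Complex.reCLM φ) (t, x)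
      + angularSq (part Complex.imCLM φ) (t, x) := by
  simp_rw [angSq, norm_sq_eq_reCLM_add_imCLM, Finset.sum_add_distrib, sum_clm_dAng_sq hφ hx]

/-- The density `⟨t+r⟩²|L(rφ)/r|² + ⟨t-r⟩²|∂̸φ|²` of the conformal energy flux through outgoing
null cones. -/
def outgoingDensity (φ : ℝ → Pt → ℂ) (p : ℝ × Pt) : ℝ :=
  jb (p.1 + rad p.2) ^ 2 * ‖dL (rmul φ) p.1 p.2 / ((rad p.2 : ℝ) : ℂ)‖ ^ 2
    + jb (p.1 - rad p.2) ^ 2 * angSq φ p.1 p.2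

/-- The density `⟨t-r⟩²|L̲(rφ)/r|² + ⟨t+r⟩²|∂̸φ|²` of the conformal energy flux through incoming
null cones. -/
def incomingDensity (φ : ℝ → Pt → ℂ) (p : ℝ × Pt) : ℝ :=
  jb (p.1 - rad p.2) ^ 2 * ‖dLbar (rmul φ) p.1 p.2 / ((rad p.2 : ℝ) : ℂ)‖ ^ 2
    + jb (p.1 + rad p.2) ^ 2 * angSq φ p.1 p.2

/-- The source `Re((2/r)K̄₀(rφ) · conj □φ)` of the conformal energy identity. -/
def conformalSource (φ : ℝ → Pt → ℂ) (p : ℝ × Pt) : ℝ :=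
  ((2 / ((rad p.2 : ℝ) : ℂ)) * K0r φ p.1 p.2 * (starRingEnd ℂ) (box φ p.1 p.2)).re

/-- The conformal energy current of `φ`: the sum of those of its real and imaginary parts. -/
def energyCurrent (φ : ℝ → Pt → ℂ) (α : Ix) (p : ℝ × Pt) : ℝ :=
  conformalCurrent (part Complex.reCLM φ) α p + conformalCurrent (part Complex.imCLM φ) α p

theorem outgoingDensity_nonneg (φ : ℝ → Pt → ℂ) (p : ℝ × Pt) : 0 ≤ outgoingDensity φ p := by
  unfold outgoingDensity angSq
  positivity

theorem incomingDensity_nonneg (φ : ℝ → Pt → ℂ) (p : ℝ × Pt) : 0 ≤ incomingDensity φ p := by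
  unfold incomingDensity angSq
  positivity

theorem eDens_eq (w : ℝ → ℝ) (φ : ℝ → Pt → ℂ) (t : ℝ) (x : Pt) :
    eDens w φ t x = (outgoingDensity φ (t, x) + incomingDensity φ (t, x)) * w (rad x - t) := by
  unfold eDens outgoingDensity incomingDensity
  ring

variable {p : ℝ × Pt}

theorem outgoingDensity_eq (hφ : Differentiable ℝ (Function.uncurry φ)) (hp : p.2 ≠ 0) :
    outgoingDensity φ p = outgoingFlux (part Complex.reCLM φ) p
      + outgoingFlux (part Complex.imCLM φ) p := by
  rw [outgoingDensity, norm_sq_eq_reCLM_add_imCLM, clm_dL_rmul_div hφ hp, clm_dL_rmul_div hφ hp,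
    angSq_eq_angularSq_add hφ hp, jb_sq, jb_sq, rad]
  unfold outgoingFlux conformalWeight
  ring

theorem incomingDensity_eq (hφ : Differentiable ℝ (Function.uncurry φ)) (hp : p.2 ≠ 0) :
    incomingDensity φ p = incomingFlux (part Complex.reCLM φ) p
      + incomingFlux (part Complex.imCLM φ) p := by
  rw [incomingDensity, norm_sq_eq_reCLM_add_imCLM, clm_dLbar_rmul_div hφ hp,
    clm_dLbar_rmul_div hφ hp, angSq_eq_angularSq_add hφ hp, jb_sq, jb_sq, rad]
  unfold incomingFlux conformalWeight
  ring

theorem conformalSource_eq (hφ : ContDiff ℝ 2 (Function.uncurry φ)) (hp : p.2 ≠ 0) :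
    conformalSource φ p =
      conformalMultiplier (part Complex.reCLM φ) p * waveOp (part Complex.reCLM φ) p
        + conformalMultiplier (part Complex.imCLM φ) p * waveOp (part Complex.imCLM φ) p := by
  have hφ₁ : Differentiable ℝ (Function.uncurry φ) := hφ.differentiable two_ne_zero
  simp_rw [← part_box hφ, ← clm_two_div_mul_K0r hφ₁ hp]
  simp only [conformalSource, part, Complex.reCLM_apply, Complex.imCLM_apply, Complex.mul_re,
    Complex.conj_re, Complex.conj_im]
  ring

theorem energyCurrent_none (hφ : Differentiable ℝ (Function.uncurry φ)) (hp : p.2 ≠ 0) :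
    energyCurrent φ none p = (outgoingDensity φ p + incomingDensity φ p) / 2 := by
  simp only [energyCurrent, conformalCurrent, conformalDensity_eq hp, outgoingDensity_eq hφ hp,
    incomingDensity_eq hφ hp]
  ring

theorem sum_coord_mul_energyCurrent (hφ : Differentiable ℝ (Function.uncurry φ)) (hp : p.2 ≠ 0) :
    ∑ i, p.2 i * energyCurrent φ (some i) p =
      -(‖p.2‖ * (outgoingDensity φ p - incomingDensity φ p) / 2) := by
  simp only [energyCurrent, mul_add, Finset.sum_add_distrib, sum_coord_mul_conformalCurrent hp,
    outgoingDensity_eq hφ hp, incomingDensity_eq hφ hp]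
  ring

theorem contDiffAt_energyCurrent (hφ : ContDiff ℝ 2 (Function.uncurry φ)) (hp : p.2 ≠ 0) (α : Ix) :
    ContDiffAt ℝ 1 (energyCurrent φ α) p :=
  (contDiffAt_conformalCurrent (contDiff_part hφ _) hp α).add
    (contDiffAt_conformalCurrent (contDiff_part hφ _) hp α)

theorem sum_partialD_energyCurrent (hφ : ContDiff ℝ 2 (Function.uncurry φ)) (hp : p.2 ≠ 0) :
    ∑ α, partialD α (energyCurrent φ α) p = -conformalSource φ p := by
  have hd (l : ℂ →L[ℝ] ℝ) (α : Ix) : DifferentiableAt ℝ (conformalCurrent (part l φ) α) p :=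
    (contDiffAt_conformalCurrent (contDiff_part hφ l) hp α).differentiableAt one_ne_zero
  have hadd (α : Ix) : partialD α (energyCurrent φ α) p =
      partialD α (conformalCurrent (part Complex.reCLM φ) α) p
        + partialD α (conformalCurrent (part Complex.imCLM φ) α) p :=
    partialD_add (hd _ α) (hd _ α)
  simp_rw [hadd, Finset.sum_add_distrib, sum_partialD_conformalCurrent (contDiff_part hφ _) hp,
    conformalSource_eq hφ hp]
  ring

end ComplexSolutions

section Cutoffs

theorem tendsto_integral_mul_of_bounded {X ι : Type*} [MeasurableSpace X] {μ : Measure X}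
    {l : Filter ι} [l.IsCountablyGenerated] {c : ι → X → ℝ} {f : X → ℝ} {a C : ℝ}
    (hf : Integrable f μ) (hc : ∀ n, AEStronglyMeasurable (c n) μ) (hC : ∀ n x, |c n x| ≤ C)
    (hlim : ∀ᵐ x ∂μ, Tendsto (fun n => c n x) l (𝓝 a)) :
    Tendsto (fun n => ∫ x, c n x * f x ∂μ) l (𝓝 (a * ∫ x, f x ∂μ)) := by
  rw [← integral_const_mul]
  refine tendsto_integral_filter_of_dominated_convergence (fun x => C * |f x|)
    (.of_forall fun n => (hc n).mul hf.1) (.of_forall fun n => .of_forall fun x => ?_)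
    (hf.abs.const_mul C) (hlim.mono fun x hx => hx.mul_const _)
  rw [Real.norm_eq_abs, abs_mul]
  exact mul_le_mul_of_nonneg_right (hC n x) (abs_nonneg _)

/-- A smooth decreasing step, equal to `1` for `q ≤ a` and to `0` for `b ≤ q`. -/
def stepDown (a b q : ℝ) : ℝ := Real.smoothTransition ((b - q) / (b - a))

variable {a b q : ℝ}

theorem contDiff_stepDown (a b : ℝ) {n : ℕ∞} : ContDiff ℝ n (stepDown a b) :=
  Real.smoothTransition.contDiff.comp (by fun_prop)

theorem hasDerivAt_stepDown (a b q : ℝ) :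
    HasDerivAt (stepDown a b) (deriv (stepDown a b) q) q :=
  ((contDiff_stepDown a b (n := 1)).differentiable one_ne_zero q).hasDerivAt

theorem stepDown_mem_Icc (a b q : ℝ) : stepDown a b q ∈ Set.Icc 0 1 :=
  ⟨Real.smoothTransition.nonneg _, Real.smoothTransition.le_one _⟩

theorem stepDown_of_le (hab : a < b) (h : q ≤ a) : stepDown a b q = 1 :=
  Real.smoothTransition.one_of_one_le ((one_le_div (sub_pos.2 hab)).2 (by linarith))

theorem stepDown_of_ge (hab : a < b) (h : b ≤ q) : stepDown a b q = 0 :=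
  Real.smoothTransition.zero_of_nonpos
    (div_nonpos_of_nonpos_of_nonneg (by linarith) (sub_pos.2 hab).le)

theorem deriv_stepDown_nonpos (hab : a < b) (q : ℝ) : deriv (stepDown a b) q ≤ 0 := by
  have : Antitone (stepDown a b) := fun x y h =>
    Real.smoothTransition.monotone
      (div_le_div_of_nonneg_right (sub_le_sub_left h b) (sub_pos.2 hab).le)
  exact this.deriv_nonpos

theorem deriv_stepDown_of_notMem (hab : a < b) (h : q ∉ Set.Icc a b) :
    deriv (stepDown a b) q = 0 := by
  rw [Set.mem_Icc, not_and_or, not_le, not_le] at h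
  rcases h with h | h
  · have : stepDown a b =ᶠ[𝓝 q] fun _ => 1 := by
      filter_upwards [Iio_mem_nhds h] with y hy using stepDown_of_le hab (le_of_lt hy)
    rw [this.deriv_eq, deriv_const]
  · have : stepDown a b =ᶠ[𝓝 q] fun _ => 0 := by
      filter_upwards [Ioi_mem_nhds h] with y hy using stepDown_of_ge hab (le_of_lt hy)
    rw [this.deriv_eq, deriv_const]

theorem mul_deriv_stepDown_nonpos (hab : a < b) {v : ℝ} (hv : q ∈ Set.Icc a b → 0 ≤ v) :
    v * deriv (stepDown a b) q ≤ 0 := by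
  by_cases hq : q ∈ Set.Icc a b
  · exact mul_nonpos_of_nonneg_of_nonpos (hv hq) (deriv_stepDown_nonpos hab q)
  · rw [deriv_stepDown_of_notMem hab hq, mul_zero]

/-- A smooth increasing step with values `0` on `s ≤ 1` and `1` on `2 ≤ s`; the rescalings
`r ↦ axisCutoff (m * r)` cut out the axis `r = 0`. -/
def axisCutoff (s : ℝ) : ℝ := 1 - stepDown 1 2 s

theorem contDiff_axisCutoff {n : ℕ∞} : ContDiff ℝ n axisCutoff :=
  contDiff_const.sub (contDiff_stepDown 1 2)

theorem hasDerivAt_axisCutoff (s : ℝ) : HasDerivAt axisCutoff (-deriv (stepDown 1 2) s) s :=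
  (hasDerivAt_stepDown 1 2 s).const_sub 1

theorem abs_axisCutoff_le_one (s : ℝ) : |axisCutoff s| ≤ 1 := by
  obtain ⟨h0, h1⟩ := stepDown_mem_Icc 1 2 s
  rw [axisCutoff, abs_le]
  constructor <;> linarith

theorem axisCutoff_of_le {s : ℝ} (h : s ≤ 1) : axisCutoff s = 0 := by
  rw [axisCutoff, stepDown_of_le one_lt_two h, sub_self]

theorem deriv_axisCutoff_of_notMem {s : ℝ} (h : s ∉ Set.Icc 1 2) : deriv axisCutoff s = 0 := by
  rw [(hasDerivAt_axisCutoff s).deriv, deriv_stepDown_of_notMem one_lt_two h, neg_zero]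

theorem exists_abs_mul_deriv_axisCutoff_le : ∃ C, ∀ s, |s * deriv axisCutoff s| ≤ C := by
  have hcont : Continuous fun s => s * deriv axisCutoff s :=
    continuous_id.mul ((contDiff_axisCutoff (n := 1)).continuous_deriv le_rfl)
  have hsupp : HasCompactSupport fun s => s * deriv axisCutoff s :=
    HasCompactSupport.intro isCompact_Icc fun s hs => by
      rw [deriv_axisCutoff_of_notMem hs, mul_zero]
  exact hsupp.exists_bound_of_continuous hcont

theorem eventually_axisCutoff_mul_eq_one {r : ℝ} (hr : 0 < r) :
    ∀ᶠ m in atTop, axisCutoff (m * r) = 1 := by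
  filter_upwards [eventually_ge_atTop (2 / r)] with m hm
  rw [axisCutoff, stepDown_of_ge one_lt_two ((div_le_iff₀ hr).1 hm), sub_zero]

theorem eventually_deriv_axisCutoff_mul_eq_zero {r : ℝ} (hr : 0 < r) :
    ∀ᶠ m in atTop, deriv axisCutoff (m * r) = 0 := by
  filter_upwards [eventually_gt_atTop (2 / r)] with m hm
  exact deriv_axisCutoff_of_notMem fun h => h.2.not_gt ((div_lt_iff₀ hr).1 hm)

theorem tendsto_integral_axisCutoff_mul {X : Type*} [MeasurableSpace X] {μ : Measure X}
    {f ρ : X → ℝ} (hf : Integrable f μ) (hρ : AEMeasurable ρ μ) (hpos : ∀ᵐ x ∂μ, 0 < ρ x) :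
    Tendsto (fun m => ∫ x, axisCutoff (m * ρ x) * f x ∂μ) atTop (𝓝 (∫ x, f x ∂μ)) := by
  have hlim := tendsto_integral_mul_of_bounded (l := atTop) (a := 1) hf
    (fun m => ((contDiff_axisCutoff (n := 0)).continuous.measurable.comp_aemeasurable
      (hρ.const_mul m)).aestronglyMeasurable)
    (fun m x => abs_axisCutoff_le_one (m * ρ x))
    (hpos.mono fun x hx => tendsto_const_nhds.congr'
      ((eventually_axisCutoff_mul_eq_one hx).mono fun _ => Eq.symm))
  rwa [one_mul] at hlim

theorem tendsto_integral_mul_deriv_axisCutoff_mul {X : Type*} [MeasurableSpace X] {μ : Measure X}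
    {f ρ : X → ℝ} (hf : Integrable f μ) (hρ : AEMeasurable ρ μ) (hpos : ∀ᵐ x ∂μ, 0 < ρ x) :
    Tendsto (fun m => ∫ x, m * ρ x * deriv axisCutoff (m * ρ x) * f x ∂μ) atTop (𝓝 0) := by
  obtain ⟨C, hC⟩ := exists_abs_mul_deriv_axisCutoff_le
  have hlim := tendsto_integral_mul_of_bounded (l := atTop) (a := 0) hf
    (fun m => ((measurable_id.mul (measurable_deriv axisCutoff)).comp_aemeasurable
      (hρ.const_mul m)).aestronglyMeasurable)
    (fun m x => hC (m * ρ x))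
    (hpos.mono fun x hx => tendsto_const_nhds.congr'
      ((eventually_deriv_axisCutoff_mul_eq_zero hx).mono fun _ h => by simp [h]))
  rwa [zero_mul] at hlim

end Cutoffs

section AxisPoles

/-- `f` is a continuous function divided by `r ^ k` away from the axis `x = 0`. -/
def HasAxisPole (k : ℕ) (f : ℝ × Pt → ℝ) : Prop :=
  ∃ g, Continuous g ∧ ∀ p : ℝ × Pt, p.2 ≠ 0 → ‖p.2‖ ^ k * f p = g p

namespace HasAxisPole

variable {k l : ℕ} {f g : ℝ × Pt → ℝ}

theorem add (hf : HasAxisPole k f) (hg : HasAxisPole k g) : HasAxisPole k fun p => f p + g p := by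
  obtain ⟨F, hF, hFf⟩ := hf
  obtain ⟨G, hG, hGg⟩ := hg
  exact ⟨fun p => F p + G p, hF.add hG, fun p hp => by rw [mul_add, hFf p hp, hGg p hp]⟩

theorem continuous_mul (hf : HasAxisPole k f) (hg : Continuous g) :
    HasAxisPole k fun p => g p * f p := by
  obtain ⟨F, hF, hFf⟩ := hf
  exact ⟨fun p => g p * F p, hg.mul hF, fun p hp => by rw [mul_left_comm, hFf p hp]⟩

theorem mono (hf : HasAxisPole k f) (hkl : k ≤ l) : HasAxisPole l f := by
  obtain ⟨F, hF, hFf⟩ := hf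
  refine ⟨fun p => ‖p.2‖ ^ (l - k) * F p, by fun_prop, fun p hp => ?_⟩
  beta_reduce
  rw [← hFf p hp, ← mul_assoc, ← pow_add, Nat.sub_add_cancel hkl]

theorem div_norm (hf : HasAxisPole k f) : HasAxisPole (k + 1) fun p => f p / ‖p.2‖ := by
  obtain ⟨F, hF, hFf⟩ := hf
  refine ⟨F, hF, fun p hp => ?_⟩
  have hr : ‖p.2‖ ≠ 0 := norm_ne_zero_iff.2 hp
  rw [← hFf p hp]
  field_simp
  ring

end HasAxisPole

theorem ae_snd_ne_zero : ∀ᵐ p : ℝ × Pt, p.2 ≠ 0 := by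
  have : volume ((Set.univ : Set ℝ) ×ˢ ({0} : Set Pt)) = 0 := by
    rw [Measure.volume_eq_prod, Measure.prod_prod, measure_singleton, mul_zero]
  filter_upwards [compl_mem_ae_iff.2 this] with p hp h using hp ⟨trivial, h⟩

theorem integrableOn_inv_norm_pow_closedBall {E : Type*} [NormedAddCommGroup E] [NormedSpace ℝ E]
    [FiniteDimensional ℝ E] [MeasurableSpace E] [BorelSpace E] (μ : Measure E) [μ.IsAddHaarMeasure]
    {k : ℕ} (hk : k < Module.finrank ℝ E) (R : ℝ) :
    IntegrableOn (fun x : E => (‖x‖ ^ k)⁻¹) (Metric.closedBall 0 R) μ := by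
  have hloc : LocallyIntegrable (fun x : E => (‖x‖ ^ k)⁻¹) μ :=
    locallyIntegrable_of_norm_le_rpow (C := 1) (α := k) (by omega) (mod_cast hk)
      (.of_forall fun x => by simp [Real.rpow_neg])
      (by fun_prop : Measurable fun x : E => (‖x‖ ^ k)⁻¹).aestronglyMeasurable
  exact hloc.integrableOn_isCompact (isCompact_closedBall 0 R)

namespace HasAxisPole

variable {k : ℕ} {f : ℝ × Pt → ℝ}

theorem integrableOn_closedBall (hf : HasAxisPole k f) (hk : k < 3) (t R : ℝ) :
    IntegrableOn (fun x => f (t, x)) (Metric.closedBall 0 R) := by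
  obtain ⟨F, hF, hFf⟩ := hf
  have hint : IntegrableOn (fun x : Pt => F (t, x) * (‖x‖ ^ k)⁻¹) (Metric.closedBall 0 R) :=
    (integrableOn_inv_norm_pow_closedBall volume (by simpa using hk) R).continuousOn_mul
      (hF.comp (by fun_prop)).continuousOn (isCompact_closedBall 0 R)
  refine hint.congr_fun_ae (ae_restrict_of_ae ?_)
  filter_upwards [Measure.ae_ne volume (0 : Pt)] with x hx
  rw [← hFf (t, x) hx]
  field_simp

theorem integrableOn_spacetimeCylinder (hf : HasAxisPole k f) (hk : k < 3) (t₁ t₂ R : ℝ) :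
    IntegrableOn f (spacetimeCylinder t₁ t₂ R) := by
  obtain ⟨F, hF, hFf⟩ := hf
  have hpole : IntegrableOn (fun p : ℝ × Pt => (‖p.2‖ ^ k)⁻¹)
      (Set.Icc t₁ t₂ ×ˢ Metric.closedBall 0 R) := by
    have hspace : IntegrableOn (fun x : Pt => (‖x‖ ^ k)⁻¹) (Metric.closedBall 0 R) :=
      integrableOn_inv_norm_pow_closedBall volume (by simpa using hk) R
    have htime : IntegrableOn (fun _ : ℝ => (1 : ℝ)) (Set.Icc t₁ t₂) := by simp
    rw [IntegrableOn, Measure.volume_eq_prod, ← Measure.prod_restrict]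
    simpa using htime.mul_prod hspace
  have hint : IntegrableOn (fun p : ℝ × Pt => F p * (‖p.2‖ ^ k)⁻¹) (spacetimeCylinder t₁ t₂ R) :=
    (hpole.continuousOn_mul hF.continuousOn
      (isCompact_Icc.prod (isCompact_closedBall 0 R))).mono_set
      (Set.prod_mono Set.Ioc_subset_Icc_self le_rfl)
  refine hint.congr_fun_ae (ae_restrict_of_ae ?_)
  filter_upwards [ae_snd_ne_zero] with p hp
  rw [← hFf p hp]
  field_simp

end HasAxisPole

variable {u : ℝ × Pt → ℝ} {φ : ℝ → Pt → ℂ}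

theorem hasAxisPole_conformalDensity (hu : ContDiff ℝ 2 u) :
    HasAxisPole 2 (conformalDensity u) := by
  have h₁ := contDiff_partialD (m := 1) hu le_rfl none
  have h₂ := contDiff_conformalMultiplier hu
  have h₃ := contDiff_lagrangian hu
  have h₄ := contDiff_eulerD hu
  have h₅ := contDiff_conformalWeight (n := 1)
  refine ⟨fun p => ‖p.2‖ ^ 2 * (conformalMultiplier u p * partialD none u p
      + conformalWeight p * lagrangian u p)
    + conformalWeight p * (2 * u p * eulerD u p + u p ^ 2), by fun_prop, fun p hp => ?_⟩
  have hr : ‖p.2‖ ≠ 0 := norm_ne_zero_iff.2 hp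
  rw [conformalDensity]
  field_simp

theorem hasAxisPole_radial_conformalCurrent (hu : ContDiff ℝ 2 u) :
    HasAxisPole 0 fun p => ∑ i, p.2 i * conformalCurrent u (some i) p := by
  have h₁ := contDiff_partialD (m := 1) hu le_rfl none
  have h₂ := contDiff_conformalMultiplier hu
  have h₃ := contDiff_lagrangian hu
  have h₄ := contDiff_eulerD hu
  have h₅ := contDiff_conformalWeight (n := 1)
  refine ⟨fun p => -(conformalMultiplier u p * eulerD u p + (2 * p.1 * u p ^ 2
      + 2 * conformalWeight p * u p * partialD none u p)
    - 2 * p.1 * lagrangian u p * ‖p.2‖ ^ 2), by fun_prop, fun p hp => ?_⟩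
  have hr : ‖p.2‖ ≠ 0 := norm_ne_zero_iff.2 hp
  beta_reduce
  rw [sum_coord_mul_conformalCurrent_eq, conformalFluxCoeff]
  field_simp
  ring

theorem hasAxisPole_outgoing_add_incoming (hφ : ContDiff ℝ 2 (Function.uncurry φ)) :
    HasAxisPole 2 fun p => outgoingDensity φ p + incomingDensity φ p := by
  obtain ⟨F, hF, hFf⟩ := (hasAxisPole_conformalDensity (contDiff_part hφ Complex.reCLM)).add
    (hasAxisPole_conformalDensity (contDiff_part hφ Complex.imCLM))
  refine ⟨fun p => 2 * F p, by fun_prop, fun p hp => ?_⟩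
  have := energyCurrent_none (hφ.differentiable two_ne_zero) hp
  simp only [energyCurrent, conformalCurrent] at this
  have hFp := hFf p hp
  simp only [this] at hFp
  beta_reduce
  rw [← hFp]
  ring

theorem hasAxisPole_outgoing_sub_incoming (hφ : ContDiff ℝ 2 (Function.uncurry φ)) :
    HasAxisPole 1 fun p => outgoingDensity φ p - incomingDensity φ p := by
  obtain ⟨F, hF, hFf⟩ := (hasAxisPole_radial_conformalCurrent (contDiff_part hφ Complex.reCLM)).add
    (hasAxisPole_radial_conformalCurrent (contDiff_part hφ Complex.imCLM))
  refine ⟨fun p => -2 * F p, by fun_prop, fun p hp => ?_⟩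
  have := sum_coord_mul_energyCurrent (hφ.differentiable two_ne_zero) hp
  simp only [energyCurrent, mul_add, Finset.sum_add_distrib] at this
  have hFp := hFf p hp
  simp only [this] at hFp
  beta_reduce
  rw [← hFp]
  ring

theorem hasAxisPole_outgoingDensity (hφ : ContDiff ℝ 2 (Function.uncurry φ)) :
    HasAxisPole 2 (outgoingDensity φ) := by
  convert ((hasAxisPole_outgoing_add_incoming hφ).add
    ((hasAxisPole_outgoing_sub_incoming hφ).mono one_le_two)).continuous_mul
    (continuous_const (y := (2⁻¹ : ℝ))) using 2
  ring

theorem hasAxisPole_incomingDensity (hφ : ContDiff ℝ 2 (Function.uncurry φ)) :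
    HasAxisPole 2 (incomingDensity φ) := by
  convert (hasAxisPole_outgoing_add_incoming hφ).add
    ((hasAxisPole_outgoingDensity hφ).continuous_mul (continuous_const (y := (-1 : ℝ)))) using 2
  ring

theorem hasAxisPole_conformalSource (hφ : ContDiff ℝ 2 (Function.uncurry φ)) :
    HasAxisPole 0 (conformalSource φ) := by
  have hwave (l : ℂ →L[ℝ] ℝ) : Continuous (waveOp (part l φ)) := by
    have hsecond (α : Ix) : Continuous (partialD α (partialD α (part l φ))) :=
      (contDiff_partialD (m := 0) (contDiff_partialD (m := 1) (contDiff_part hφ l) le_rfl α)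
        le_rfl α).continuous
    exact (hsecond none).neg.add (continuous_finsetSum _ fun i _ => hsecond (some i))
  have hmul (l : ℂ →L[ℝ] ℝ) : Continuous (conformalMultiplier (part l φ)) :=
    (contDiff_conformalMultiplier (contDiff_part hφ l)).continuous
  exact ⟨_, ((hmul Complex.reCLM).mul (hwave Complex.reCLM)).add
    ((hmul Complex.imCLM).mul (hwave Complex.imCLM)),
    fun p hp => by rw [pow_zero, one_mul, conformalSource_eq hφ hp]; rfl⟩

end AxisPoles

section RadialWeights

variable {g : ℝ × ℝ → ℝ} {φ : ℝ → Pt → ℂ} {p : ℝ × Pt} {t₁ t₂ R : ℝ}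

theorem contDiffAt_comp_norm (hg : ContDiff ℝ 1 g) (hp : p.2 ≠ 0) :
    ContDiffAt ℝ 1 (fun q : ℝ × Pt => g (q.1, ‖q.2‖)) p :=
  hg.contDiffAt.comp p (contDiffAt_fst.prodMk (contDiffAt_snd.norm ℝ hp))

theorem partialD_comp_norm (hg : DifferentiableAt ℝ g (p.1, ‖p.2‖)) (hp : p.2 ≠ 0) (α : Ix) :
    partialD α (fun q : ℝ × Pt => g (q.1, ‖q.2‖)) p =
      fderiv ℝ g (p.1, ‖p.2‖) (α.elim (1, 0) fun i => (0, p.2 i / ‖p.2‖)) := by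
  have hnorm : HasFDerivAt (fun y : Pt => ‖y‖) _ p.2 :=
    (differentiableAt_id.norm ℝ hp).hasFDerivAt
  have hradius : HasFDerivAt (fun q : ℝ × Pt => (q.1, ‖q.2‖)) _ p :=
    hasFDerivAt_fst.prodMk (hnorm.comp p hasFDerivAt_snd)
  have hcomp : HasFDerivAt (fun q : ℝ × Pt => g (q.1, ‖q.2‖)) _ p := hg.hasFDerivAt.comp p hradius
  rw [partialD, hcomp.fderiv]
  cases α <;> simp [coordDir, fderiv_norm_single hp]

/-- The spacetime density in the energy identity for a weight `g (t, r)`: the source, minus the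
derivatives of `g` along `∂_t ∓ ∂_r` paired with the fluxes through null cones. -/
def energyBulk (g : ℝ × ℝ → ℝ) (φ : ℝ → Pt → ℂ) (p : ℝ × Pt) : ℝ :=
  g (p.1, ‖p.2‖) * conformalSource φ p
    - (outgoingDensity φ p * fderiv ℝ g (p.1, ‖p.2‖) (1, -1)
      + incomingDensity φ p * fderiv ℝ g (p.1, ‖p.2‖) (1, 1)) / 2

theorem sum_partialD_comp_norm_mul_energyCurrent (hφ : Differentiable ℝ (Function.uncurry φ))
    (hg : DifferentiableAt ℝ g (p.1, ‖p.2‖)) (hp : p.2 ≠ 0) :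
    ∑ α, partialD α (fun q : ℝ × Pt => g (q.1, ‖q.2‖)) p * energyCurrent φ α p =
      (outgoingDensity φ p * fderiv ℝ g (p.1, ‖p.2‖) (1, -1)
        + incomingDensity φ p * fderiv ℝ g (p.1, ‖p.2‖) (1, 1)) / 2 := by
  have hr : ‖p.2‖ ≠ 0 := norm_ne_zero_iff.2 hp
  set D := fderiv ℝ g (p.1, ‖p.2‖) with hD
  have hsplit (a b : ℝ) : D (a, b) = a * D (1, 0) + b * D (0, 1) := by
    rw [← smul_eq_mul, ← smul_eq_mul, ← map_smul, ← map_smul, ← map_add]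
    simp
  have hspace (i : Fin 3) :
      partialD (some i) (fun q : ℝ × Pt => g (q.1, ‖q.2‖)) p * energyCurrent φ (some i) p =
        D (0, 1) / ‖p.2‖ * (p.2 i * energyCurrent φ (some i) p) := by
    rw [partialD_comp_norm hg hp, ← hD, Option.elim_some, hsplit]
    ring
  rw [Fintype.sum_option, Finset.sum_congr rfl fun i _ => hspace i, ← Finset.mul_sum,
    sum_coord_mul_energyCurrent hφ hp, partialD_comp_norm hg hp, energyCurrent_none hφ hp,
    ← hD, Option.elim_none, hsplit 1 (-1), hsplit 1 1]
  field_simp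
  ring

theorem energy_identity_of_eq_zero_near_axis {ε : ℝ} (hφ : ContDiff ℝ 2 (Function.uncurry φ))
    (hg : ContDiff ℝ 1 g) (hε : 0 < ε) (hgε : ∀ t r, r < ε → g (t, r) = 0) (h : t₁ ≤ t₂)
    (hgR : ∀ t ∈ Set.Ioc t₁ t₂, ∀ r, R ≤ r → g (t, r) = 0) :
    (∫ x in Metric.closedBall (0 : Pt) R, g (t₁, ‖x‖) *
        ((outgoingDensity φ (t₁, x) + incomingDensity φ (t₁, x)) / 2))
      - ∫ x in Metric.closedBall (0 : Pt) R, g (t₂, ‖x‖) *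
        ((outgoingDensity φ (t₂, x) + incomingDensity φ (t₂, x)) / 2) =
      ∫ p in spacetimeCylinder t₁ t₂ R, energyBulk g φ p := by
  have hφ₁ : Differentiable ℝ (Function.uncurry φ) := hφ.differentiable two_ne_zero
  have hχ : ContDiff ℝ 1 fun q : ℝ × Pt => g (q.1, ‖q.2‖) := by
    refine contDiff_iff_contDiffAt.2 fun p => ?_
    rcases eq_or_ne p.2 0 with hp | hp
    · refine (contDiffAt_const (c := (0 : ℝ))).congr_of_eventuallyEq ?_
      filter_upwards [(isOpen_lt continuous_snd.norm continuous_const).mem_nhds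
        (show ‖p.2‖ < ε by simpa [hp] using hε)] with q hq using hgε _ _ hq
    · exact contDiffAt_comp_norm hg hp
  have hslice (t : ℝ) : ∫ x in Metric.closedBall (0 : Pt) R, g (t, ‖x‖) *
      ((outgoingDensity φ (t, x) + incomingDensity φ (t, x)) / 2) =
      ∫ x in Metric.closedBall (0 : Pt) R, g (t, ‖x‖) * energyCurrent φ none (t, x) := by
    refine integral_congr_ae (ae_restrict_of_ae ?_)
    filter_upwards [Measure.ae_ne volume (0 : Pt)] with x hx
    rw [energyCurrent_none (p := (t, x)) hφ₁ hx]
  rw [hslice, hslice, setIntegral_weighted_current (fun α p hp => contDiffAt_energyCurrent hφ hp α)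
    hχ hε (fun p hp => hgε _ _ hp) h fun t ht x hx => hgR t ht _ hx, ← integral_neg]
  refine integral_congr_ae (ae_restrict_of_ae ?_)
  filter_upwards [ae_snd_ne_zero] with p hp
  rw [sum_partialD_energyCurrent hφ hp, sum_partialD_comp_norm_mul_energyCurrent hφ₁
    (hg.differentiable one_ne_zero _) hp, energyBulk]
  ring

theorem energyBulk_axisCutoff_mul (hg : Differentiable ℝ g) (φ : ℝ → Pt → ℂ) (m : ℝ)
    (p : ℝ × Pt) :
    energyBulk (fun q => axisCutoff (m * q.2) * g q) φ p =
      axisCutoff (m * ‖p.2‖) * energyBulk g φ p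
        + m * ‖p.2‖ * deriv axisCutoff (m * ‖p.2‖) *
          (g (p.1, ‖p.2‖) / 2 * ((outgoingDensity φ p - incomingDensity φ p) / ‖p.2‖)) := by
  have hη : HasFDerivAt (fun q : ℝ × ℝ => axisCutoff (m * q.2)) _ (p.1, ‖p.2‖) :=
    ((contDiff_axisCutoff (n := 1)).differentiable one_ne_zero _).hasDerivAt.comp_hasFDerivAt
      (p.1, ‖p.2‖) ((hasFDerivAt_snd (𝕜 := ℝ)).const_mul m)
  have hD (v : ℝ × ℝ) : fderiv ℝ (fun q => axisCutoff (m * q.2) * g q) (p.1, ‖p.2‖) v =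
      axisCutoff (m * ‖p.2‖) * fderiv ℝ g (p.1, ‖p.2‖) v
        + m * deriv axisCutoff (m * ‖p.2‖) * g (p.1, ‖p.2‖) * v.2 := by
    rw [(hη.fun_mul (hg _).hasFDerivAt).fderiv]
    simp
    ring
  simp only [energyBulk, hD]
  rcases eq_or_ne ‖p.2‖ 0 with hr | hr
  · rw [hr, mul_zero, deriv_axisCutoff_of_notMem (by norm_num)]
    ring
  · field_simp
    ring

theorem hasAxisPole_energyBulk (hφ : ContDiff ℝ 2 (Function.uncurry φ)) (hg : ContDiff ℝ 1 g) :
    HasAxisPole 2 (energyBulk g φ) := by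
  have hg₀ : Continuous fun p : ℝ × Pt => g (p.1, ‖p.2‖) := hg.continuous.comp (by fun_prop)
  have hg₁ (v : ℝ × ℝ) : Continuous fun p : ℝ × Pt => fderiv ℝ g (p.1, ‖p.2‖) v / -2 :=
    (((hg.continuous_fderiv one_ne_zero).comp (by fun_prop)).clm_apply continuous_const).div_const _
  convert (((hasAxisPole_conformalSource hφ).mono zero_le_two).continuous_mul hg₀).add
    (((hasAxisPole_outgoingDensity hφ).continuous_mul (hg₁ (1, -1))).add
      ((hasAxisPole_incomingDensity hφ).continuous_mul (hg₁ (1, 1)))) using 2 with p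
  rw [energyBulk]
  ring

theorem tendsto_setIntegral_energyBulk_axisCutoff_mul (hφ : ContDiff ℝ 2 (Function.uncurry φ))
    (hg : ContDiff ℝ 1 g) (t₁ t₂ R : ℝ) :
    Tendsto (fun m : ℝ => ∫ p in spacetimeCylinder t₁ t₂ R,
        energyBulk (fun q => axisCutoff (m * q.2) * g q) φ p) atTop
      (𝓝 (∫ p in spacetimeCylinder t₁ t₂ R, energyBulk g φ p)) := by
  have hg₀ : Continuous fun p : ℝ × Pt => g (p.1, ‖p.2‖) / 2 :=
    (hg.continuous.comp (by fun_prop)).div_const _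
  have hbulk : IntegrableOn (energyBulk g φ) (spacetimeCylinder t₁ t₂ R) :=
    (hasAxisPole_energyBulk hφ hg).integrableOn_spacetimeCylinder (by norm_num) ..
  have herror : IntegrableOn (fun p : ℝ × Pt => g (p.1, ‖p.2‖) / 2 *
      ((outgoingDensity φ p - incomingDensity φ p) / ‖p.2‖)) (spacetimeCylinder t₁ t₂ R) :=
    ((hasAxisPole_outgoing_sub_incoming hφ).div_norm.continuous_mul
      hg₀).integrableOn_spacetimeCylinder (by norm_num) ..
  have hr : Measurable fun p : ℝ × Pt => ‖p.2‖ := measurable_snd.norm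
  have hpos : ∀ᵐ p ∂volume.restrict (spacetimeCylinder t₁ t₂ R), 0 < ‖p.2‖ :=
    ae_restrict_of_ae (ae_snd_ne_zero.mono fun _ => norm_pos_iff.2)
  have hlim := (tendsto_integral_axisCutoff_mul hbulk hr.aemeasurable hpos).add
    (tendsto_integral_mul_deriv_axisCutoff_mul herror hr.aemeasurable hpos)
  rw [add_zero] at hlim
  refine hlim.congr fun m => ?_
  obtain ⟨C, hC⟩ := exists_abs_mul_deriv_axisCutoff_le
  have hmr : Measurable fun p : ℝ × Pt => m * ‖p.2‖ := hr.const_mul m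
  simp_rw [energyBulk_axisCutoff_mul (hg.differentiable one_ne_zero)]
  refine (integral_add (hbulk.bdd_mul
      ((contDiff_axisCutoff (n := 0)).continuous.measurable.comp hmr).aestronglyMeasurable
      (.of_forall fun p => abs_axisCutoff_le_one (m * ‖p.2‖))) (herror.bdd_mul
      (hmr.mul ((measurable_deriv axisCutoff).comp hmr)).aestronglyMeasurable
      (.of_forall fun p => hC (m * ‖p.2‖)))).symm

theorem energy_identity_radial_weight (hφ : ContDiff ℝ 2 (Function.uncurry φ))
    (hg : ContDiff ℝ 1 g) (h : t₁ ≤ t₂) (hgR : ∀ t ∈ Set.Ioc t₁ t₂, ∀ r, R ≤ r → g (t, r) = 0) :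
    (∫ x in Metric.closedBall (0 : Pt) R, g (t₁, ‖x‖) *
        ((outgoingDensity φ (t₁, x) + incomingDensity φ (t₁, x)) / 2))
      - ∫ x in Metric.closedBall (0 : Pt) R, g (t₂, ‖x‖) *
        ((outgoingDensity φ (t₂, x) + incomingDensity φ (t₂, x)) / 2) =
      ∫ p in spacetimeCylinder t₁ t₂ R, energyBulk g φ p := by
  have hslice (t : ℝ) : Tendsto (fun m : ℝ => ∫ x in Metric.closedBall (0 : Pt) R,
      axisCutoff (m * ‖x‖) * g (t, ‖x‖) *
        ((outgoingDensity φ (t, x) + incomingDensity φ (t, x)) / 2)) atTop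
      (𝓝 (∫ x in Metric.closedBall (0 : Pt) R, g (t, ‖x‖) *
        ((outgoingDensity φ (t, x) + incomingDensity φ (t, x)) / 2))) := by
    have hg₀ : Continuous fun p : ℝ × Pt => g (p.1, ‖p.2‖) / 2 :=
      (hg.continuous.comp (by fun_prop)).div_const _
    have hint := ((hasAxisPole_outgoing_add_incoming hφ).continuous_mul
      hg₀).integrableOn_closedBall (by norm_num) t R
    have hlim := tendsto_integral_axisCutoff_mul hint measurable_norm.aemeasurable
      (ae_restrict_of_ae ((Measure.ae_ne volume 0).mono fun _ => norm_pos_iff.2))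
    convert hlim using 3 <;> ring_nf
  refine tendsto_nhds_unique (((hslice t₁).sub (hslice t₂)).congr' ?_)
    (tendsto_setIntegral_energyBulk_axisCutoff_mul hφ hg t₁ t₂ R)
  filter_upwards [eventually_gt_atTop 0] with m hm
  refine energy_identity_of_eq_zero_near_axis (g := fun q => axisCutoff (m * q.2) * g q) hφ
    (ContDiff.mul ((contDiff_axisCutoff (n := 1)).comp (by fun_prop)) hg) (inv_pos.2 hm)
    (fun t r hr => ?_) h fun t ht r hr => ?_
  · rw [axisCutoff_of_le ((lt_inv_mul_iff₀ hm).1 (by simpa using hr)).le, zero_mul]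
  · rw [hgR t ht r hr, mul_zero]

end RadialWeights

section NullCutoffs

/-- A spacetime cutoff `c (t, r)` on the slab `[t₁, t₂]` that vanishes for large `r` and whose
fluxes through outgoing and incoming null cones have the sign dictated by the weight `w`. -/
structure IsNullCutoff (w : ℝ → ℝ) (t₁ t₂ : ℝ) (c : ℝ × ℝ → ℝ) : Prop where
  contDiff : ContDiff ℝ 1 c
  mem_Icc : ∀ p, c p ∈ Set.Icc 0 1
  exists_eq_zero : ∃ R, ∀ t ∈ Set.Icc t₁ t₂, ∀ r, R ≤ r → c (t, r) = 0
  outgoing_nonneg : ∀ t ∈ Set.Icc t₁ t₂, ∀ r, 0 ≤ r →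
    0 ≤ w (r - t) * fderiv ℝ c (t, r) (1, -1)
  incoming_nonneg : ∀ t ∈ Set.Icc t₁ t₂, ∀ r, 0 ≤ r →
    0 ≤ w (r - t) * fderiv ℝ c (t, r) (1, 1)

variable {w : ℝ → ℝ} {c : ℝ × ℝ → ℝ} {φ : ℝ → Pt → ℂ} {t₁ t₂ : ℝ}

theorem bulk1_box (w : ℝ → ℝ) (φ : ℝ → Pt → ℂ) (p : ℝ × Pt) :
    bulk1 w φ (box φ) p.1 p.2 = w (‖p.2‖ - p.1) * conformalSource φ p :=
  mul_comm _ _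

theorem bulk2_eq (w : ℝ → ℝ) (φ : ℝ → Pt → ℂ) (p : ℝ × Pt) :
    bulk2 w φ p.1 p.2 = deriv w (‖p.2‖ - p.1) * outgoingDensity φ p :=
  mul_comm _ _

theorem hasAxisPole_bulk1 (hw : Continuous w) (hφ : ContDiff ℝ 2 (Function.uncurry φ)) :
    HasAxisPole 0 fun p : ℝ × Pt => bulk1 w φ (box φ) p.1 p.2 := by
  simp only [bulk1_box]
  exact (hasAxisPole_conformalSource hφ).continuous_mul (hw.comp (by fun_prop))

theorem hasAxisPole_bulk2 (hw : ContDiff ℝ 1 w) (hφ : ContDiff ℝ 2 (Function.uncurry φ)) :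
    HasAxisPole 2 fun p : ℝ × Pt => bulk2 w φ p.1 p.2 := by
  simp only [bulk2_eq]
  exact (hasAxisPole_outgoingDensity hφ).continuous_mul
    ((hw.continuous_deriv le_rfl).comp (by fun_prop))

theorem energyBulk_mul (hw : Differentiable ℝ w) (hc : Differentiable ℝ c) (p : ℝ × Pt) :
    energyBulk (fun q => c q * w (q.2 - q.1)) φ p =
      c (p.1, ‖p.2‖) * (bulk1 w φ (box φ) p.1 p.2 + bulk2 w φ p.1 p.2)
        - (outgoingDensity φ p * (w (‖p.2‖ - p.1) * fderiv ℝ c (p.1, ‖p.2‖) (1, -1))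
          + incomingDensity φ p * (w (‖p.2‖ - p.1) * fderiv ℝ c (p.1, ‖p.2‖) (1, 1))) / 2 := by
  have hweight : HasFDerivAt (fun q : ℝ × ℝ => w (q.2 - q.1)) _ (p.1, ‖p.2‖) :=
    (hw _).hasDerivAt.comp_hasFDerivAt (p.1, ‖p.2‖)
      ((hasFDerivAt_snd (𝕜 := ℝ)).sub hasFDerivAt_fst)
  have hD (v : ℝ × ℝ) : fderiv ℝ (fun q => c q * w (q.2 - q.1)) (p.1, ‖p.2‖) v =
      c (p.1, ‖p.2‖) * (deriv w (‖p.2‖ - p.1) * (v.2 - v.1))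
        + w (‖p.2‖ - p.1) * fderiv ℝ c (p.1, ‖p.2‖) v := by
    rw [((hc _).hasFDerivAt.fun_mul hweight).fderiv]
    simp
  rw [energyBulk, hD, hD, bulk1_box, bulk2_eq]
  ring

namespace IsNullCutoff

theorem energyBulk_le (hc : IsNullCutoff w t₁ t₂ c) (hw : Differentiable ℝ w) {p : ℝ × Pt}
    (hp : p.1 ∈ Set.Icc t₁ t₂) :
    energyBulk (fun q => c q * w (q.2 - q.1)) φ p ≤
      c (p.1, ‖p.2‖) * (bulk1 w φ (box φ) p.1 p.2 + bulk2 w φ p.1 p.2) := by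
  rw [energyBulk_mul hw (hc.contDiff.differentiable one_ne_zero)]
  have hout := mul_nonneg (outgoingDensity_nonneg φ p)
    (hc.outgoing_nonneg p.1 hp ‖p.2‖ (norm_nonneg _))
  have hin := mul_nonneg (incomingDensity_nonneg φ p)
    (hc.incoming_nonneg p.1 hp ‖p.2‖ (norm_nonneg _))
  linarith

theorem setIntegral_energyBulk_le (hc : IsNullCutoff w t₁ t₂ c) (hw : ContDiff ℝ 1 w)
    (hφ : ContDiff ℝ 2 (Function.uncurry φ)) {R : ℝ}
    (hR : ∀ t ∈ Set.Icc t₁ t₂, ∀ r, R ≤ r → c (t, r) = 0) :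
    ∫ p in spacetimeCylinder t₁ t₂ R, energyBulk (fun q => c q * w (q.2 - q.1)) φ p ≤
      ∫ p in Set.Ioc t₁ t₂ ×ˢ (Set.univ : Set Pt),
        c (p.1, ‖p.2‖) * (bulk1 w φ (box φ) p.1 p.2 + bulk2 w φ p.1 p.2) := by
  have hg : ContDiff ℝ 1 fun q : ℝ × ℝ => c q * w (q.2 - q.1) :=
    hc.contDiff.mul (hw.comp (by fun_prop))
  have hpole : HasAxisPole 2 fun p : ℝ × Pt =>
      c (p.1, ‖p.2‖) * (bulk1 w φ (box φ) p.1 p.2 + bulk2 w φ p.1 p.2) :=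
    (((hasAxisPole_bulk1 hw.continuous hφ).mono zero_le_two).add
      (hasAxisPole_bulk2 hw hφ)).continuous_mul (hc.contDiff.continuous.comp (by fun_prop))
  calc ∫ p in spacetimeCylinder t₁ t₂ R, energyBulk (fun q => c q * w (q.2 - q.1)) φ p
      ≤ ∫ p in spacetimeCylinder t₁ t₂ R,
          c (p.1, ‖p.2‖) * (bulk1 w φ (box φ) p.1 p.2 + bulk2 w φ p.1 p.2) :=
        setIntegral_mono_on
          ((hasAxisPole_energyBulk hφ hg).integrableOn_spacetimeCylinder (by norm_num) ..)
          (hpole.integrableOn_spacetimeCylinder (by norm_num) ..)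
          (measurableSet_Ioc.prod measurableSet_closedBall) fun p hp =>
          hc.energyBulk_le (hw.differentiable one_ne_zero) (Set.Ioc_subset_Icc_self hp.1)
    _ = _ := by
        refine (setIntegral_eq_of_subset_of_forall_sdiff_eq_zero
          (measurableSet_Ioc.prod .univ) (Set.prod_mono le_rfl (Set.subset_univ _))
          fun p hp => ?_).symm
        have hr : R ≤ ‖p.2‖ := by
          by_contra! hr
          exact hp.2 ⟨hp.1.1, mem_closedBall_zero_iff.2 hr.le⟩
        rw [hR p.1 (Set.Ioc_subset_Icc_self hp.1.1) _ hr, zero_mul]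

theorem energy_inequality (hc : IsNullCutoff w t₁ t₂ c) (hw : ContDiff ℝ 1 w)
    (hφ : ContDiff ℝ 2 (Function.uncurry φ)) (h : t₁ ≤ t₂) :
    1 / 2 * ∫ x : Pt, c (t₁, ‖x‖) * eDens w φ t₁ x ≤
      1 / 2 * (∫ x : Pt, c (t₂, ‖x‖) * eDens w φ t₂ x)
        + ∫ p in Set.Ioc t₁ t₂ ×ˢ (Set.univ : Set Pt),
          c (p.1, ‖p.2‖) * (bulk1 w φ (box φ) p.1 p.2 + bulk2 w φ p.1 p.2) := by
  obtain ⟨R, hR⟩ := hc.exists_eq_zero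
  have hg : ContDiff ℝ 1 fun q : ℝ × ℝ => c q * w (q.2 - q.1) :=
    hc.contDiff.mul (hw.comp (by fun_prop))
  have hslice {t : ℝ} (ht : t ∈ Set.Icc t₁ t₂) :
      ∫ x in Metric.closedBall (0 : Pt) R, c (t, ‖x‖) * w (‖x‖ - t) *
        ((outgoingDensity φ (t, x) + incomingDensity φ (t, x)) / 2) =
      1 / 2 * ∫ x : Pt, c (t, ‖x‖) * eDens w φ t x := by
    rw [← integral_const_mul, setIntegral_eq_integral_of_forall_compl_eq_zero
      fun x hx => ?_]
    · refine integral_congr_ae (.of_forall fun x => ?_)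
      beta_reduce
      rw [eDens_eq, rad]
      ring
    · rw [hR t ht ‖x‖ (not_le.1 (mt mem_closedBall_zero_iff.2 hx)).le, zero_mul, zero_mul]
  have hbulk := hc.setIntegral_energyBulk_le hw hφ hR
  have hidentity := energy_identity_radial_weight hφ hg h (R := R)
    fun t ht r hr => by rw [hR t (Set.Ioc_subset_Icc_self ht) r hr, zero_mul]
  simp only at hidentity
  rw [hslice (Set.left_mem_Icc.2 h), hslice (Set.right_mem_Icc.2 h)] at hidentity
  linarith

end IsNullCutoff

theorem isNullCutoff_outgoing {a b : ℝ} (hab : a < b) (hw : ∀ q ∈ Set.Icc a b, 0 ≤ w q) :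
    IsNullCutoff w t₁ t₂ fun p => stepDown a b (p.2 - p.1) := by
  have hD (t r : ℝ) (v : ℝ × ℝ) :
      fderiv ℝ (fun p : ℝ × ℝ => stepDown a b (p.2 - p.1)) (t, r) v =
        deriv (stepDown a b) (r - t) * (v.2 - v.1) := by
    have := (hasDerivAt_stepDown a b (r - t)).comp_hasFDerivAt (t, r)
      ((hasFDerivAt_snd (𝕜 := ℝ) (p := (t, r))).sub hasFDerivAt_fst)
    exact congr($(this.fderiv) v)
  refine ⟨(contDiff_stepDown a b (n := 1)).comp (by fun_prop), fun p => stepDown_mem_Icc a b _,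
    ⟨b + t₂, fun t ht r hr => stepDown_of_ge hab (by linarith [ht.2])⟩,
    fun t _ r _ => ?_, fun t _ r _ => ?_⟩
  · rw [hD]
    linarith [mul_deriv_stepDown_nonpos hab (hw (r - t))]
  · simp [hD]

theorem isNullCutoff_incoming {a b : ℝ} (hab : a < b) (hw : ∀ q, a - 2 * t₂ ≤ q → w q ≤ 0) :
    IsNullCutoff w t₁ t₂ fun p => stepDown a b (p.2 + p.1) := by
  have hD (t r : ℝ) (v : ℝ × ℝ) :
      fderiv ℝ (fun p : ℝ × ℝ => stepDown a b (p.2 + p.1)) (t, r) v =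
        deriv (stepDown a b) (r + t) * (v.2 + v.1) := by
    have := (hasDerivAt_stepDown a b (r + t)).comp_hasFDerivAt (t, r)
      ((hasFDerivAt_snd (𝕜 := ℝ) (p := (t, r))).add hasFDerivAt_fst)
    exact congr($(this.fderiv) v)
  refine ⟨(contDiff_stepDown a b (n := 1)).comp (by fun_prop), fun p => stepDown_mem_Icc a b _,
    ⟨b - t₁, fun t ht r hr => stepDown_of_ge hab (by linarith [ht.1])⟩,
    fun t _ r _ => ?_, fun t ht r _ => ?_⟩
  · simp [hD]
  · have := mul_deriv_stepDown_nonpos (q := r + t) hab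
      fun hq => neg_nonneg.2 (hw (r - t) (by linarith [hq.1, ht.2]))
    rw [hD]
    linarith

theorem exists_isNullCutoff (hw : Continuous w) (t₁ t₂ ρ : ℝ) :
    ∃ c, IsNullCutoff w t₁ t₂ c ∧ ∀ t ∈ Set.Icc t₁ t₂, ∀ r ≤ ρ, c (t, r) = 1 := by
  by_cases hpos : ∃ᶠ q in atTop, 0 < w q
  · obtain ⟨a, ha, hwa⟩ := frequently_atTop.1 hpos (ρ - t₁)
    obtain ⟨b, hab, hb⟩ := nhdsGE_basis_Icc.mem_iff.1
      (mem_nhdsWithin_of_mem_nhds (hw.continuousAt.eventually_const_lt hwa))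
    exact ⟨_, isNullCutoff_outgoing hab fun q hq => le_of_lt (hb hq),
      fun t ht r hr => stepDown_of_le hab (by linarith [ht.1])⟩
  · obtain ⟨Q, hQ⟩ := eventually_atTop.1 (not_frequently.1 hpos)
    obtain ⟨a, haρ, haQ⟩ : ∃ a, ρ + t₂ ≤ a ∧ Q + 2 * t₂ ≤ a :=
      ⟨max (ρ + t₂) (Q + 2 * t₂), le_max_left _ _, le_max_right _ _⟩
    exact ⟨_, isNullCutoff_incoming (lt_add_one a) fun q hq => not_lt.1 (hQ q (by linarith)),
      fun t ht r hr => stepDown_of_le (lt_add_one a) (by linarith [ht.2])⟩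

end NullCutoffs

section EnergyIdentity

variable {w : ℝ → ℝ} {φ : ℝ → Pt → ℂ} {t₁ t₂ : ℝ}

theorem tendsto_integral_cutoff_mul {X : Type*} [MeasurableSpace X] {μ : Measure X}
    {c : ℕ → X → ℝ} {f ρ : X → ℝ} (hf : Integrable f μ)
    (hcm : ∀ n, AEStronglyMeasurable (c n) μ) (hc : ∀ n x, c n x ∈ Set.Icc 0 1)
    (hone : ∀ n : ℕ, ∀ᵐ x ∂μ, ρ x ≤ n → c n x = 1) :
    Tendsto (fun n => ∫ x, c n x * f x ∂μ) atTop (𝓝 (∫ x, f x ∂μ)) := by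
  have hlim := tendsto_integral_mul_of_bounded (l := atTop) (a := 1) (C := 1) hf hcm
    (fun n x => abs_le.2 ⟨by linarith [(hc n x).1], (hc n x).2⟩) (by
      filter_upwards [ae_all_iff.2 hone] with x hx
      refine tendsto_const_nhds.congr' ?_
      filter_upwards [eventually_ge_atTop ⌈ρ x⌉₊] with n hn
      exact (hx n (Nat.ceil_le.1 hn)).symm)
  rwa [one_mul] at hlim

theorem Ew_le (hw : ContDiff ℝ 1 w) (hφ : ContDiff ℝ 2 (Function.uncurry φ)) (h : t₁ ≤ t₂)
    (hE₁ : Integrable (eDens w φ t₁)) (hE₂ : Integrable (eDens w φ t₂))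
    (hbulk : IntegrableOn (fun p : ℝ × Pt => bulk1 w φ (box φ) p.1 p.2 + bulk2 w φ p.1 p.2)
      (Set.Ioc t₁ t₂ ×ˢ Set.univ)) :
    Ew w φ t₁ ≤ Ew w φ t₂ + ∫ p in Set.Ioc t₁ t₂ ×ˢ (Set.univ : Set Pt),
      (bulk1 w φ (box φ) p.1 p.2 + bulk2 w φ p.1 p.2) := by
  choose c hc hone using fun n : ℕ => exists_isNullCutoff hw.continuous t₁ t₂ n
  have hslice {t : ℝ} (ht : t ∈ Set.Icc t₁ t₂) (hE : Integrable (eDens w φ t)) :=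
    tendsto_integral_cutoff_mul (c := fun n x => c n (t, ‖x‖)) (ρ := norm) hE
      (fun n => ((hc n).contDiff.continuous.comp (by fun_prop)).aestronglyMeasurable)
      (fun n x => (hc n).mem_Icc _) (fun n => .of_forall fun x => hone n t ht _)
  have hspacetime := tendsto_integral_cutoff_mul (c := fun n p => c n (p.1, ‖p.2‖))
    (ρ := fun p => ‖p.2‖) hbulk
    (fun n => ((hc n).contDiff.continuous.comp (by fun_prop)).aestronglyMeasurable)
    (fun n x => (hc n).mem_Icc _) (fun n => by
      filter_upwards [ae_restrict_mem (measurableSet_Ioc.prod .univ)] with p hp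
      exact hone n p.1 (Set.Ioc_subset_Icc_self hp.1) _)
  exact le_of_tendsto_of_tendsto' ((hslice (Set.left_mem_Icc.2 h) hE₁).const_mul _)
    (((hslice (Set.right_mem_Icc.2 h) hE₂).const_mul _).add hspacetime)
    fun n => (hc n).energy_inequality hw hφ h

theorem eDens_neg (w : ℝ → ℝ) (φ : ℝ → Pt → ℂ) : eDens (-w) φ = -eDens w φ := by
  ext t x
  simp only [eDens, Pi.neg_apply, mul_neg]

theorem bulk1_neg (w : ℝ → ℝ) (φ F : ℝ → Pt → ℂ) : bulk1 (-w) φ F = -bulk1 w φ F := by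
  ext t x
  simp only [bulk1, Pi.neg_apply, mul_neg]

theorem bulk2_neg (w : ℝ → ℝ) (φ : ℝ → Pt → ℂ) : bulk2 (-w) φ = -bulk2 w φ := by
  ext t x
  simp only [bulk2, Pi.neg_apply, deriv.neg, mul_neg]

theorem Ew_neg (w : ℝ → ℝ) (φ : ℝ → Pt → ℂ) (t : ℝ) : Ew (-w) φ t = -Ew w φ t := by
  simp only [Ew, eDens_neg, Pi.neg_apply, integral_neg, mul_neg]

theorem Ew_eq (hw : ContDiff ℝ 1 w) (hφ : ContDiff ℝ 2 (Function.uncurry φ)) (h : t₁ ≤ t₂)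
    (hE₁ : Integrable (eDens w φ t₁)) (hE₂ : Integrable (eDens w φ t₂))
    (hbulk : IntegrableOn (fun p : ℝ × Pt => bulk1 w φ (box φ) p.1 p.2 + bulk2 w φ p.1 p.2)
      (Set.Ioc t₁ t₂ ×ˢ Set.univ)) :
    Ew w φ t₁ = Ew w φ t₂ + ∫ p in Set.Ioc t₁ t₂ ×ˢ (Set.univ : Set Pt),
      (bulk1 w φ (box φ) p.1 p.2 + bulk2 w φ p.1 p.2) := by
  refine le_antisymm (Ew_le hw hφ h hE₁ hE₂ hbulk) ?_
  have hneg := Ew_le (w := -w) hw.neg hφ h (by rw [eDens_neg]; exact hE₁.neg)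
    (by rw [eDens_neg]; exact hE₂.neg)
    (by simp only [bulk1_neg, bulk2_neg, Pi.neg_apply, ← neg_add]; exact hbulk.neg)
  simp only [Ew_neg, bulk1_neg, bulk2_neg, Pi.neg_apply, ← neg_add, integral_neg] at hneg
  linarith

theorem setIntegral_prod_univ {X Y : Type*} [MeasureSpace X] [MeasureSpace Y]
    [SFinite (volume : Measure X)] [SFinite (volume : Measure Y)] {f : X × Y → ℝ} {s : Set X}
    (hf : IntegrableOn f (s ×ˢ Set.univ)) :
    ∫ p in s ×ˢ (Set.univ : Set Y), f p = ∫ t in s, ∫ x, f (t, x) := by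
  rw [Measure.volume_eq_prod] at hf ⊢
  rw [setIntegral_prod _ hf]
  simp only [Measure.restrict_univ]

theorem stmt1_general {F : ℝ → Pt → ℂ} (hw : ContDiff ℝ 1 w)
    (hφ : ContDiff ℝ 2 (Function.uncurry φ)) (hbox : ∀ t x, box φ t x = F t x) (h12 : t₁ ≤ t₂)
    (hE₁ : Integrable (eDens w φ t₁)) (hE₂ : Integrable (eDens w φ t₂))
    (h1 : IntegrableOn (fun p : ℝ × Pt => bulk1 w φ F p.1 p.2) (Set.Ioc t₁ t₂ ×ˢ Set.univ))
    (h2 : IntegrableOn (fun p : ℝ × Pt => bulk2 w φ p.1 p.2) (Set.Ioc t₁ t₂ ×ˢ Set.univ)) :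
    Ew w φ t₁ = Ew w φ t₂
      + (∫ t in Set.Ioc t₁ t₂, ∫ x : Pt, bulk1 w φ F t x)
      + (∫ t in Set.Ioc t₁ t₂, ∫ x : Pt, bulk2 w φ t x) := by
  obtain rfl : box φ = F := funext₂ hbox
  rw [Ew_eq hw hφ h12 hE₁ hE₂ (h1.add h2), integral_add h1 h2, setIntegral_prod_univ h1,
    setIntegral_prod_univ h2, add_assoc]

end EnergyIdentity

/-- Proposition 2.2, weighted conformal Morawetz energy identity.
For a `C¹` weight `w` and a smooth solution `φ` of `□φ = F` decaying at spatial
infinity, with all the integrals absolutely convergent, one has, for `t₁ ≤ t₂`: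
`E^w[φ](t₁) = E^w[φ](t₂) + ∫∫ Re((2/r)K̄₀(rφ) conj F) w + ∫∫ (⟨t+r⟩²|L(rφ)/r|² + ⟨t−r⟩²|∂̸φ|²) w′`. -/
theorem stmt1 (w : ℝ → ℝ) (hw : ContDiff ℝ 1 w)
    (φ F : ℝ → Pt → ℂ) (hφ : Smooth2 φ)
    (hbox : ∀ t x, box φ t x = F t x)
    (hdecay : ∀ t : ℝ, Tendsto
      (fun x : Pt => rad x ^ ((3 : ℝ) / 2) * ‖φ t x‖ * Real.sqrt (w (rad x - t)))
      (Filter.cocompact Pt) (𝓝 0))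
    (t₁ t₂ : ℝ) (h12 : t₁ ≤ t₂)
    (hE : ∀ t ∈ Set.Icc t₁ t₂, Integrable (fun x : Pt => eDens w φ t x))
    (h1 : IntegrableOn (fun p : ℝ × Pt => bulk1 w φ F p.1 p.2)
      (Set.Ioc t₁ t₂ ×ˢ (Set.univ : Set Pt)))
    (h2 : IntegrableOn (fun p : ℝ × Pt => bulk2 w φ p.1 p.2)
      (Set.Ioc t₁ t₂ ×ˢ (Set.univ : Set Pt))) :
    Ew w φ t₁ = Ew w φ t₂
      + (∫ t in Set.Ioc t₁ t₂, ∫ x : Pt, bulk1 w φ F t x)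
      + (∫ t in Set.Ioc t₁ t₂, ∫ x : Pt, bulk2 w φ t x) := by
  exact stmt1_general hw (contDiff_infty.1 hφ 2) hbox h12
    (hE t₁ (Set.left_mem_Icc.2 h12)) (hE t₂ (Set.right_mem_Icc.2 h12)) h1 h2
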